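/- arXiv:1105.1986 — 9 statements merged into one kernel-verified Lean document; each statement's English description precedes it below -/
import Mathlib

section
/- For every ω ∈ ℝ and every (x, y, z) ∈ ℝ³, one has 𝓜⁻¹(Ω_ω(𝓜(x, y, z))) = (x cos ω − y sin ω, x sin ω + y cos ω, z − (1/2)·x·y + (1/4)·(x² − y²)·sin 2ω + (1/2)·x·y·cos 2ω). That is, the Nil rotation ℛ_ω about the z-axis given by the right-hand side is the conjugate of the Euclidean rotation Ω_ω by the quadratic mapping 𝓜. -/
open Real

/-- The quadratic mapping 𝓜. -/
noncomputable def quadM : ℝ × ℝ × ℝ → ℝ × ℝ × ℝ := fun p => (p.1, p.2.1, p.2.2 - (1 / 2) * p.1 * p.2.1)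

/-- The inverse of the quadratic mapping 𝓜. -/
noncomputable def quadMinv : ℝ × ℝ × ℝ → ℝ × ℝ × ℝ := fun p => (p.1, p.2.1, p.2.2 + (1 / 2) * p.1 * p.2.1)

/-- The Euclidean rotation Ω_ω about the z-axis. -/
noncomputable def rotOmega (ω : ℝ) : ℝ × ℝ × ℝ → ℝ × ℝ × ℝ :=
  fun p => (p.1 * cos ω - p.2.1 * sin ω, p.1 * sin ω + p.2.1 * cos ω, p.2.2)

/-- The Nil rotation about the z-axis is the conjugate of the Euclidean rotation by
the quadratic mapping 𝓜. -/
theorem nil_rotation_conjugate (ω x y z : ℝ) :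
    quadMinv (rotOmega ω (quadM (x, y, z))) =
      (x * cos ω - y * sin ω, x * sin ω + y * cos ω,
        z - (1 / 2) * x * y + (1 / 4) * (x ^ 2 - y ^ 2) * sin (2 * ω) +
          (1 / 2) * x * y * cos (2 * ω)) := by
  -- The first two coordinates agree by definition; the third is the expansion of
  -- (x cos ω - y sin ω)(x sin ω + y cos ω) / 2 via the double-angle formulas.
  simp only [quadMinv, rotOmega, quadM, Prod.mk.injEq, true_and]
  rw [sin_two_mul, cos_two_mul']
  ring
end

section
/- Let R > 0. Then X(R, θ) > 0 for every θ ∈ (0, π/2) if and only if R ≤ 2π. (This expresses that the geodesic sphere of radius R in Nil space exists as a simply connected surface without self-intersection if and only if R ∈ [0, 2π]: the profile curve of the sphere stays away from the rotation axis exactly for these radii.) -/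
/-! The prefactor `2 cos θ / sin θ` is positive on `(0, π/2)`, so the sign of `nilX R θ` is that of
`sin (R sin θ / 2)`. As `sin θ` ranges over `(0, 1)`, the argument ranges over `(0, R/2)`: this
interval lies in `(0, π)` when `R ≤ 2π`, and it contains the zero `π` of the sine otherwise. -/

open Real

/-- The radial profile function `X(r, θ)` of the Nil geodesic sphere of radius `r`
(in the projective model, after the quadratic mapping). -/
noncomputable def nilX (r θ : ℝ) : ℝ :=
  if θ = 0 then r else (2 * cos θ / sin θ) * sin (r * sin θ / 2)

/-- The height profile function `Z(r, θ)` of the Nil geodesic sphere of radius `r`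
(in the projective model, after the quadratic mapping). -/
noncomputable def nilZ (r θ : ℝ) : ℝ :=
  if θ = 0 then 0 else
    r * sin θ + r * cos θ ^ 2 / (2 * sin θ) -
      (cos θ ^ 2 / (2 * sin θ ^ 2)) * sin (r * sin θ)

/-- The profile curve of the geodesic sphere of radius `R` stays away from the
rotation axis on `(0, π/2)` iff `R ≤ 2π`: the geodesic sphere of radius `R` exists
in Nil space iff `R ∈ [0, 2π]`. -/
theorem nil_sphere_exists_iff (R : ℝ) (hR : 0 < R) :
    (∀ θ ∈ Set.Ioo 0 (π / 2), 0 < nilX R θ) ↔ R ≤ 2 * π := by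
  constructor
  · intro h
    by_contra! hlt
    -- At the angle with `R sin θ = 2π` the factor `sin (R sin θ / 2)` vanishes.
    have h0 : 0 < 2 * π / R := by positivity
    have h1 : 2 * π / R < 1 := (div_lt_one hR).2 hlt
    have hs : sin (arcsin (2 * π / R)) = 2 * π / R := sin_arcsin (by linarith) h1.le
    have hpos : 0 < arcsin (2 * π / R) := arcsin_pos.2 h0
    have hX := h _ ⟨hpos, arcsin_lt_pi_div_two.2 h1⟩
    have hpi : R * (2 * π / R) / 2 = π := by field_simp
    rw [nilX, if_neg hpos.ne', hs, hpi, sin_pi, mul_zero] at hX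
    exact lt_irrefl _ hX
  · rintro hle θ ⟨h0, h1⟩
    have hc : 0 < cos θ := cos_pos_of_mem_Ioo ⟨by linarith, h1⟩
    have hs : 0 < sin θ := sin_pos_of_pos_of_lt_pi h0 (by linarith [pi_pos])
    have hs1 : sin θ < 1 := by nlinarith [sin_sq_add_cos_sq θ]
    have hsin : 0 < sin (R * sin θ / 2) :=
      sin_pos_of_pos_of_lt_pi (by positivity) (by nlinarith)
    rw [nilX, if_neg h0.ne']
    positivity
end

section
/- Let R ∈ (0, 2π] and define the Nil geodesic ball body B(R) ⊆ ℝ³ as B(R) = {(0,0,0)} ∪ { ( X(r,θ)·cos φ, X(r,θ)·sin φ, Z(r,θ) + (1/4)·X(r,θ)²·sin 2φ ) : r ∈ (0, R], θ ∈ [−π/2, π/2], φ ∈ (−π, π] }. Then B(R) is a convex subset of ℝ³ (in the affine-Euclidean sense of the model) if and only if R ≤ π/2. -/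
/-!
Write `ρ² = x² + y²` and `w = z - xy/2`, the height before the quadratic shear of the model.

For `R ≤ π/2` the ball is an intersection of explicit convex sets (`nilBall_eq_nilBallDual`):
it consists of the points with
`|w| ≤ u + R²/(4u) - cot u · ρ²/4` for every `u ∈ (0, R/2]`.
The right-hand sides are the tangents to the upper profile of the ball, viewed as a concave
function of `ρ²`; the parameter `u` is `r sin θ / 2` at the point of tangency. Since
`z - xy/2 + ρ²/4 = z + (x - y)²/4` and `-z + xy/2 + ρ²/4 = -z + (x + y)²/4`, each inequality bounds
a convex quadratic function as soon as `cot u ≥ 1`, that is `u ≤ π/4`.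

Points of the ball satisfy the inequalities by `dual_bound`, which rests on
`sin v cos v - cot u · sin² v ≥ v - v²/u`. Conversely, for `ρ, w > 0` the intermediate value theorem
gives `v ∈ (0, R/2]` with `2v + (ρ²/4)(v - sin v cos v)/sin² v = w`, which is the height of the
geodesic with parameter `v` over the circle of radius `ρ`, and the inequality with `u = v` says
exactly that its length is at most `R`.

For `R > π/2` the geodesics with `R sin θ = π/2` in the two directions of the line `x = y` end at
a height greater than `R`. The midpoint of these two ends lies on the `z`-axis, where the ball
only reaches height `R`.
-/

open Real

/-- The body of the Nil geodesic ball of radius `R` in the projective model. -/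
noncomputable def nilBall (R : ℝ) : Set (ℝ × ℝ × ℝ) :=
  {p | p = (0, 0, 0) ∨
    ∃ r ∈ Set.Ioc 0 R, ∃ θ ∈ Set.Icc (-(π / 2)) (π / 2), ∃ φ ∈ Set.Ioc (-π) π,
      p = (nilX r θ * cos φ, nilX r θ * sin φ,
            nilZ r θ + (1 / 4) * nilX r θ ^ 2 * sin (2 * φ))}

/-! ### Profile functions -/

lemma nilX_neg (r θ : ℝ) : nilX r (-θ) = nilX r θ := by
  unfold nilX
  by_cases h : θ = 0
  · simp [h]
  · simp [h, neg_div, div_neg]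

lemma nilZ_neg (r θ : ℝ) : nilZ r (-θ) = -nilZ r θ := by
  unfold nilZ
  by_cases h : θ = 0
  · simp [h]
  · simp [h, div_neg]
    ring

/-- The height profile of the section of the sphere by the plane `x = y`. -/
lemma nilZ_add_sq {r θ : ℝ} (h0 : 0 < θ) (h1 : θ ≤ π / 2) :
    nilZ r θ + nilX r θ ^ 2 / 4 = r * sin θ + r * cos θ ^ 2 / (2 * sin θ)
      + cos θ ^ 2 / (2 * sin θ ^ 2) * (1 - cos (r * sin θ) - sin (r * sin θ)) := by
  have hs : sin θ ≠ 0 := (sin_pos_of_pos_of_lt_pi h0 (by linarith [pi_pos])).ne'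
  have h2 : cos (r * sin θ) = 1 - 2 * sin (r * sin θ / 2) ^ 2 := by
    have := cos_two_mul' (r * sin θ / 2)
    rw [show 2 * (r * sin θ / 2) = r * sin θ by ring, cos_sq'] at this
    linarith
  rw [nilX, nilZ, if_neg h0.ne', if_neg h0.ne', h2]
  field_simp
  ring

/-- The profile in terms of `v = r sin θ / 2` and `k = cot² θ`, for a geodesic going upwards. -/
lemma profile_eq {r θ : ℝ} (hr : 0 < r) (h0 : 0 < θ) (h1 : θ ≤ π / 2) :
    ∃ v k : ℝ, 0 < v ∧ 0 ≤ k ∧ v ≤ r / 2 ∧ r ^ 2 = 4 * v ^ 2 * (1 + k) ∧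
      nilX r θ ^ 2 = 4 * k * sin v ^ 2 ∧ nilZ r θ = 2 * v + k * (v - sin v * cos v) := by
  have hs : 0 < sin θ := sin_pos_of_pos_of_lt_pi h0 (by linarith [pi_pos])
  have hsc := sin_sq_add_cos_sq θ
  refine ⟨r * sin θ / 2, cos θ ^ 2 / sin θ ^ 2, by positivity, by positivity, ?_, ?_, ?_, ?_⟩
  · nlinarith [sin_le_one θ]
  · field_simp
    linarith
  · rw [nilX, if_neg h0.ne']
    ring
  · have h2 := sin_two_mul (r * sin θ / 2)
    rw [show 2 * (r * sin θ / 2) = r * sin θ by ring] at h2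
    rw [nilZ, if_neg h0.ne', h2]
    field_simp
    ring

/-! ### Trigonometric inequalities -/

lemma mul_cos_le_sin {x : ℝ} (h0 : 0 ≤ x) (h1 : x < π / 2) : x * cos x ≤ sin x := by
  have hc : 0 < cos x := cos_pos_of_mem_Ioo ⟨by linarith, h1⟩
  have := le_tan h0 h1
  rwa [tan_eq_sin_div_cos, le_div_iff₀ hc] at this

lemma sin_mul_cos_le {x : ℝ} (h0 : 0 ≤ x) : sin x * cos x ≤ x := by
  have h := sin_le (x := 2 * x) (by linarith)
  rw [sin_two_mul] at h
  linarith

/-- `sin x / x` is nonincreasing. -/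
lemma sinc_anti {u v : ℝ} (hu : 0 < u) (huv : u ≤ v) (hv : v < π / 2) :
    sin v * u ≤ sin u * v := by
  have hc := mul_cos_le_sin hu.le (by linarith)
  have hcu : 0 < cos u := cos_pos_of_mem_Ioo ⟨by linarith, by linarith⟩
  have hsu : 0 < sin u := sin_pos_of_pos_of_lt_pi hu (by linarith)
  have hd : sin (v - u) ≤ v - u := sin_le (by linarith)
  have h1 : sin v = sin u * cos (v - u) + cos u * sin (v - u) := by
    rw [← sin_add]; ring_nf
  have h2 : cos (v - u) ≤ 1 := cos_le_one _
  rw [h1]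
  nlinarith [mul_le_mul_of_nonneg_left h2 (mul_pos hsu hu).le,
    mul_le_mul_of_nonneg_left hd (mul_pos hcu hu).le,
    mul_le_mul_of_nonneg_right hc (sub_nonneg.2 huv)]

/-- The tangent inequality in the direction of `cot² θ`. Clearing denominators, it compares
`sinc u` with `sinc v * sinc (u - v)`: the latter is larger for `v ≤ u` because `log sinc` is
subadditive, and smaller for `u ≤ v` because `sinc` is nonincreasing and at most `1`. -/
lemma trig_bound {u v : ℝ} (hu : 0 < u) (hu' : u < π / 2) (hv : 0 < v) (hv' : v < π / 2) :
    0 ≤ v ^ 2 / u - v + sin v * cos v - cos u / sin u * sin v ^ 2 := by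
  have hsu : 0 < sin u := sin_pos_of_pos_of_lt_pi hu (by linarith)
  have hsv : 0 < sin v := sin_pos_of_pos_of_lt_pi hv (by linarith)
  have key : v ^ 2 / u - v + sin v * cos v - cos u / sin u * sin v ^ 2
      = (v * (v - u) * sin u + u * sin v * sin (u - v)) / (u * sin u) := by
    rw [sin_sub]
    field_simp
    ring
  rw [key]
  apply div_nonneg _ (by positivity)
  rcases le_total v u with h | h
  · obtain ⟨d, rfl⟩ : ∃ d, u = v + d := ⟨u - v, by ring⟩
    have hd : 0 ≤ d := by linarith
    have hsd : 0 ≤ sin d := sin_nonneg_of_nonneg_of_le_pi hd (by linarith)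
    have e1 := mul_cos_le_sin hd (by linarith)
    have e2 := mul_cos_le_sin hv.le hv'
    rw [sin_add, show v + d - v = d by ring]
    nlinarith [mul_nonneg (mul_pos hv hsv).le (sub_nonneg.2 e1),
      mul_nonneg (mul_nonneg hd hsd) (sub_nonneg.2 e2)]
  · have e1 := sinc_anti hu h hv'
    have e2 : sin (v - u) ≤ v - u := sin_le (by linarith)
    rw [show u - v = -(v - u) by ring, sin_neg]
    nlinarith [mul_le_mul_of_nonneg_left e2 (mul_pos hu hsv).le,
      mul_le_mul_of_nonneg_right e1 (sub_nonneg.2 h)]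

/-! ### The ball as an intersection of convex sets -/

/-- The points whose sheared height `w = z - xy/2` satisfies all the tangent inequalities
`|w| ≤ u + R²/(4u) - cot u · ρ²/4`, `0 < u ≤ R/2`. -/
def nilBallDual (R : ℝ) : Set (ℝ × ℝ × ℝ) :=
  {p | ∀ u ∈ Set.Ioc 0 (R / 2), |p.2.2 - p.1 * p.2.1 / 2| ≤
    u + R ^ 2 / (4 * u) - cos u / sin u * (p.1 ^ 2 + p.2.1 ^ 2) / 4}

/-- Each of the two inequalities for `u` bounds a quadratic function, which is convex because
`cot u ≥ 1`. -/
lemma convex_nilBallDual {R : ℝ} (hR : R ≤ π / 2) : Convex ℝ (nilBallDual R) := by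
  rintro ⟨x, y, z⟩ hp ⟨x', y', z'⟩ hq a b ha hb hab u hu
  have h1 := abs_le.1 (hp u hu)
  have h2 := abs_le.1 (hq u hu)
  have hsu : 0 < sin u := sin_pos_of_pos_of_lt_pi hu.1 (by linarith [hu.2, pi_pos])
  have hk : 1 ≤ cos u / sin u := by
    rw [one_le_div hsu, ← cos_pi_div_two_sub]
    exact cos_le_cos_of_nonneg_of_le_pi hu.1.le (by linarith [hu.1, pi_pos])
      (by linarith [hu.2])
  generalize cos u / sin u = k at *
  generalize u + R ^ 2 / (4 * u) = C at *
  simp only [Prod.smul_mk, Prod.mk_add_mk, smul_eq_mul] at h1 h2 ⊢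
  obtain rfl : b = 1 - a := by linarith
  have hk' : 0 ≤ k - 1 := by linarith
  have hm : 0 ≤ a * (1 - a) * ((k - 1) * ((x - x') ^ 2 + (y - y') ^ 2)) := by positivity
  have hd : 0 ≤ a * (1 - a) * ((x - x') - (y - y')) ^ 2 := by positivity
  have hs : 0 ≤ a * (1 - a) * ((x - x') + (y - y')) ^ 2 := by positivity
  rw [abs_le]
  constructor
  · linear_combination a * h1.1 + (1 - a) * h2.1 + hm / 4 + hs / 4
  · linear_combination a * h1.2 + (1 - a) * h2.2 + hm / 4 + hd / 4

/-- An upward geodesic with `v = r sin θ / 2` and `k = cot² θ` misses the tangent bound at `u`, with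
`r` in place of `R`, by `(u - v)² / u` plus `k` times the left side of `trig_bound`. -/
lemma dual_bound_up {R r θ u : ℝ} (hR : R ≤ π / 2) (hr : r ∈ Set.Ioc 0 R) (h0 : 0 ≤ θ)
    (h1 : θ ≤ π / 2) (hu : u ∈ Set.Ioc 0 (R / 2)) :
    |nilZ r θ| ≤ u + R ^ 2 / (4 * u) - cos u / sin u * nilX r θ ^ 2 / 4 := by
  obtain ⟨hu0, hu1⟩ := hu
  obtain ⟨hr0, hr1⟩ := hr
  have hπ := pi_pos
  have hsu : 0 < sin u := sin_pos_of_pos_of_lt_pi hu0 (by linarith)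
  have hrR : r ^ 2 / (4 * u) ≤ R ^ 2 / (4 * u) := by gcongr
  rcases h0.eq_or_lt with rfl | h0
  · have hc : cos u / sin u ≤ 1 / u := by
      rw [div_le_div_iff₀ hsu hu0]
      linarith [mul_cos_le_sin hu0.le (by linarith)]
    have := mul_le_mul_of_nonneg_right hc (sq_nonneg r)
    have e : r ^ 2 / (4 * u) = 1 / u * r ^ 2 / 4 := by field_simp
    simp only [nilX, nilZ, if_true, abs_zero]
    linarith
  · obtain ⟨v, k, hv, hk, hvr, e1, e2, e3⟩ := profile_eq hr0 h0 h1
    have hz : 0 ≤ nilZ r θ := by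
      rw [e3]
      nlinarith [mul_nonneg hk (sub_nonneg.2 (sin_mul_cos_le hv.le))]
    have ht := mul_nonneg hk (trig_bound hu0 (by linarith) hv (by linarith))
    have hq : 0 ≤ (u - v) ^ 2 / u := by positivity
    rw [abs_of_nonneg hz, e2, e3]
    rw [e1] at hrR
    have e : u + 4 * v ^ 2 * (1 + k) / (4 * u) - cos u / sin u * (4 * k * sin v ^ 2) / 4
        - (2 * v + k * (v - sin v * cos v)) = (u - v) ^ 2 / u
        + k * (v ^ 2 / u - v + sin v * cos v - cos u / sin u * sin v ^ 2) := by
      field_simp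
      ring
    linarith

lemma dual_bound {R r θ u : ℝ} (hR : R ≤ π / 2) (hr : r ∈ Set.Ioc 0 R)
    (hθ : θ ∈ Set.Icc (-(π / 2)) (π / 2)) (hu : u ∈ Set.Ioc 0 (R / 2)) :
    |nilZ r θ| ≤ u + R ^ 2 / (4 * u) - cos u / sin u * nilX r θ ^ 2 / 4 := by
  rcases le_total 0 θ with h | h
  · exact dual_bound_up hR hr h hθ.2 hu
  · have := dual_bound_up (θ := -θ) hR hr (by linarith) (by linarith [hθ.1]) hu
    rwa [nilX_neg, nilZ_neg, abs_neg] at this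

lemma nilBall_subset_dual {R : ℝ} (hR0 : 0 < R) (hR : R ≤ π / 2) :
    nilBall R ⊆ nilBallDual R := by
  rintro _ (rfl | ⟨r, hr, θ, hθ, φ, -, rfl⟩) u hu
  · have := hu.1
    simp only [mul_zero, zero_div, sub_zero, abs_zero, ne_eq, OfNat.ofNat_ne_zero,
      not_false_eq_true, zero_pow, add_zero]
    positivity
  · have h := dual_bound hR hr hθ hu
    have e1 : nilZ r θ + 1 / 4 * nilX r θ ^ 2 * sin (2 * φ)
        - nilX r θ * cos φ * (nilX r θ * sin φ) / 2 = nilZ r θ := by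
      rw [sin_two_mul]; ring
    have e2 : (nilX r θ * cos φ) ^ 2 + (nilX r θ * sin φ) ^ 2 = nilX r θ ^ 2 := by
      linear_combination nilX r θ ^ 2 * sin_sq_add_cos_sq φ
    simpa only [e1, e2] using h

/-- The tangent inequalities for `u → 0` confine the projection of the body to the disc of
radius `R`. -/
lemma radius_le {R ρ : ℝ} (hR0 : 0 < R) (hR : R ≤ π / 2) (hρ : 0 ≤ ρ)
    (h : ∀ u ∈ Set.Ioc 0 (R / 2), 0 ≤ u + R ^ 2 / (4 * u) - cos u / sin u * ρ ^ 2 / 4) :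
    ρ ≤ R := by
  have hlim : Filter.Tendsto (fun u : ℝ => R ^ 2 + 4 * u ^ 2 - cos u * ρ ^ 2)
      (nhdsWithin 0 (Set.Ioi 0)) (nhds (R ^ 2 + 4 * 0 ^ 2 - cos 0 * ρ ^ 2)) :=
    (Continuous.tendsto (by fun_prop) 0).mono_left nhdsWithin_le_nhds
  have h0 : 0 ≤ R ^ 2 + 4 * 0 ^ 2 - cos 0 * ρ ^ 2 := by
    refine ge_of_tendsto hlim ?_
    filter_upwards [Ioc_mem_nhdsGT (show (0 : ℝ) < R / 2 by linarith)] with u hu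
    have hu0 := hu.1
    have hsu : 0 < sin u := sin_pos_of_pos_of_lt_pi hu0 (by linarith [hu.2, pi_pos])
    have hcu : 0 ≤ cos u := cos_nonneg_of_mem_Icc ⟨by linarith, by linarith [hu.2]⟩
    have hc : cos u ≤ u * (cos u / sin u) := by
      rw [← mul_div_assoc, le_div_iff₀ hsu]
      nlinarith [sin_le hu0.le]
    have h1 := mul_nonneg (by positivity : 0 ≤ 4 * u) (h u hu)
    have e : 4 * u * (u + R ^ 2 / (4 * u) - cos u / sin u * ρ ^ 2 / 4)
        = R ^ 2 + 4 * u ^ 2 - u * (cos u / sin u) * ρ ^ 2 := by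
      field_simp
      ring
    rw [e] at h1
    nlinarith [mul_le_mul_of_nonneg_right hc (sq_nonneg ρ)]
  rw [cos_zero] at h0
  nlinarith

/-- `(v - sin v cos v) / sin² v`, the factor of `ρ²/4` in the height of a geodesic; the junk value
`0` at `v = 0` is the continuous extension. -/
noncomputable def heightCoeff (v : ℝ) : ℝ := (v - sin v * cos v) / sin v ^ 2

lemma heightCoeff_nonneg {v : ℝ} (hv : 0 ≤ v) : 0 ≤ heightCoeff v :=
  div_nonneg (sub_nonneg.2 (sin_mul_cos_le hv)) (sq_nonneg _)

lemma heightCoeff_le_tan {v : ℝ} (hv : 0 ≤ v) (hv' : v < π / 2) : heightCoeff v ≤ tan v := by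
  rcases hv.eq_or_lt with rfl | h0
  · simp [heightCoeff]
  have hs : 0 < sin v := sin_pos_of_pos_of_lt_pi h0 (by linarith)
  have hc : 0 < cos v := cos_pos_of_mem_Ioo ⟨by linarith, hv'⟩
  rw [heightCoeff, tan_eq_sin_div_cos, div_le_div_iff₀ (by positivity) hc]
  nlinarith [mul_cos_le_sin hv hv', sin_sq_add_cos_sq v]

lemma continuousOn_heightCoeff {a : ℝ} (ha : a < π / 2) :
    ContinuousOn heightCoeff (Set.Icc 0 a) := by
  intro v hv
  rcases hv.1.eq_or_lt with rfl | h0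
  · have h00 : heightCoeff 0 = 0 := by simp [heightCoeff]
    rw [ContinuousWithinAt, h00]
    have ht : Filter.Tendsto tan (nhdsWithin 0 (Set.Icc 0 a)) (nhds 0) := by
      have : ContinuousAt tan 0 := continuousAt_tan.2 (by simp)
      simpa using this.tendsto.mono_left (nhdsWithin_le_nhds (s := Set.Icc 0 a))
    refine squeeze_zero' ?_ ?_ ht
    · filter_upwards [self_mem_nhdsWithin] with w hw using heightCoeff_nonneg hw.1
    · filter_upwards [self_mem_nhdsWithin] with w hw
        using heightCoeff_le_tan hw.1 (by linarith [hw.2])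
  · have hs : 0 < sin v := sin_pos_of_pos_of_lt_pi h0 (by linarith [hv.2, pi_pos])
    apply ContinuousAt.continuousWithinAt
    unfold heightCoeff
    exact ContinuousAt.div (by fun_prop) (by fun_prop) (by positivity)

/-- A profile point `(ρ, w)` with `w ≥ 0` satisfying the tangent inequalities is reached by an
upward geodesic of length at most `R`. -/
lemma exists_profile_up {R ρ w : ℝ} (hR0 : 0 < R) (hR : R ≤ π / 2) (hρ : 0 ≤ ρ) (hw : 0 ≤ w)
    (hne : ρ ≠ 0 ∨ w ≠ 0)
    (h : ∀ u ∈ Set.Ioc 0 (R / 2), w ≤ u + R ^ 2 / (4 * u) - cos u / sin u * ρ ^ 2 / 4) :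
    ∃ r ∈ Set.Ioc 0 R, ∃ θ ∈ Set.Icc 0 (π / 2), nilX r θ = ρ ∧ nilZ r θ = w := by
  have hπ := pi_pos
  have hRR : w ≤ R - cos (R / 2) / sin (R / 2) * ρ ^ 2 / 4 := by
    have := h (R / 2) ⟨by linarith, le_rfl⟩
    have e : R / 2 + R ^ 2 / (4 * (R / 2)) = R := by field_simp; ring
    rwa [e] at this
  rcases hρ.eq_or_lt with rfl | hρ
  · -- On the axis the geodesic is vertical.
    have hw' : 0 < w := lt_of_le_of_ne hw (by simpa [eq_comm] using hne)
    refine ⟨w, ⟨hw', by simpa using hRR⟩, π / 2, ⟨by linarith, le_rfl⟩, ?_, ?_⟩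
    · simp [nilX]
    · simp [nilZ, hπ.ne']
  have hsR : 0 < sin (R / 2) := sin_pos_of_pos_of_lt_pi (by linarith) (by linarith)
  have hcR : 0 < cos (R / 2) := cos_pos_of_mem_Ioo ⟨by linarith, by linarith⟩
  have hwR : w ≤ R := by
    have : 0 ≤ cos (R / 2) / sin (R / 2) * ρ ^ 2 / 4 := by positivity
    linarith
  obtain ⟨v, hv, hvw⟩ : w ∈ (fun v => 2 * v + ρ ^ 2 / 4 * heightCoeff v) '' Set.Icc 0 (R / 2) := by
    apply intermediate_value_Icc (by linarith)
    · exact (by fun_prop : Continuous fun v : ℝ => 2 * v).continuousOn.add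
        (continuousOn_const.mul (continuousOn_heightCoeff (by linarith)))
    · have h1 : 0 ≤ ρ ^ 2 / 4 * heightCoeff (R / 2) :=
        mul_nonneg (by positivity) (heightCoeff_nonneg (by linarith))
      have h2 : heightCoeff 0 = 0 := by simp [heightCoeff]
      constructor
      · simpa [h2] using hw
      · linarith
  simp only at hvw
  rcases hv.1.eq_or_lt with rfl | h0
  · have hw0 : w = 0 := by rw [← hvw]; simp [heightCoeff]
    refine ⟨ρ, ⟨hρ, radius_le hR0 hR hρ.le (by simpa [hw0] using h)⟩, 0, ⟨le_rfl, by linarith⟩,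
      ?_, ?_⟩
    · simp [nilX]
    · simp [nilZ, hw0]
  have hs : 0 < sin v := sin_pos_of_pos_of_lt_pi h0 (by linarith [hv.2])
  set θ := arctan (2 * sin v / ρ) with hθ
  have hθ0 : 0 < θ := arctan_pos.2 (by positivity)
  have hθ1 : θ < π / 2 := arctan_lt_pi_div_two _
  have hsθ : 0 < sin θ := sin_pos_of_pos_of_lt_pi hθ0 (by linarith)
  have hcθ : 0 < cos θ := cos_pos_of_mem_Ioo ⟨by linarith, hθ1⟩
  have htan : sin θ * ρ = 2 * sin v * cos θ := by
    have := tan_arctan (2 * sin v / ρ)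
    rw [← hθ, tan_eq_sin_div_cos, div_eq_div_iff hcθ.ne' hρ.ne'] at this
    exact this
  have hcot : cos θ / sin θ = ρ / (2 * sin v) := by
    rw [div_eq_div_iff hsθ.ne' (by positivity)]
    linarith
  have hrs : 2 * v / sin θ * sin θ = 2 * v := by field_simp
  refine ⟨2 * v / sin θ, ⟨by positivity, ?_⟩, θ, ⟨hθ0.le, hθ1.le⟩, ?_, ?_⟩
  · -- The tangent inequality at `u = v` bounds the length of the geodesic.
    have hb := h v ⟨h0, hv.2⟩
    have e1 : 1 / sin θ ^ 2 = 1 + (ρ / (2 * sin v)) ^ 2 := by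
      rw [← hcot]
      field_simp
      linarith [sin_sq_add_cos_sq θ]
    have e2 : (2 * v / sin θ) ^ 2 = 4 * v ^ 2 * (1 + (ρ / (2 * sin v)) ^ 2) := by
      rw [← e1]
      field_simp
      ring
    have e3 : R ^ 2 - (2 * v / sin θ) ^ 2
        = 4 * v * (v + R ^ 2 / (4 * v) - cos v / sin v * ρ ^ 2 / 4 - w) := by
      rw [e2, ← hvw, heightCoeff]
      field_simp
      ring
    have e4 : 0 ≤ R ^ 2 - (2 * v / sin θ) ^ 2 := by
      rw [e3]
      exact mul_nonneg (by positivity) (by linarith)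
    exact le_of_sq_le_sq (by linarith) hR0.le
  · rw [nilX, if_neg hθ0.ne', hrs, mul_div_assoc, hcot]
    field_simp
  · have e : nilZ (2 * v / sin θ) θ
        = 2 * v + (cos θ / sin θ) ^ 2 * (v - sin (2 * v) / 2) := by
      rw [nilZ, if_neg hθ0.ne', hrs]
      field_simp
      ring
    rw [e, hcot, sin_two_mul, ← hvw, heightCoeff]
    field_simp
    ring

lemma dual_subset_nilBall {R : ℝ} (hR0 : 0 < R) (hR : R ≤ π / 2) :
    nilBallDual R ⊆ nilBall R := by
  rintro ⟨x, y, z⟩ hp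
  by_cases h00 : x = 0 ∧ y = 0 ∧ z = 0
  · exact Or.inl (by simp [h00])
  right
  set c : ℂ := ⟨x, y⟩ with hc
  have hρ : ‖c‖ ^ 2 = x ^ 2 + y ^ 2 := by
    rw [Complex.sq_norm, Complex.normSq_apply]
    simp only [hc]
    ring
  have hx : ‖c‖ * cos c.arg = x := Complex.norm_mul_cos_arg c
  have hy : ‖c‖ * sin c.arg = y := Complex.norm_mul_sin_arg c
  have hne : ‖c‖ ≠ 0 ∨ |z - x * y / 2| ≠ 0 := by
    by_contra! hcon
    have h1 : x = 0 := by rw [← hx, hcon.1, zero_mul]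
    have h2 : y = 0 := by rw [← hy, hcon.1, zero_mul]
    refine h00 ⟨h1, h2, ?_⟩
    have := abs_eq_zero.1 hcon.2
    rwa [h1, zero_mul, zero_div, sub_zero] at this
  obtain ⟨r, hr, θ, hθ, hX, hZ⟩ := exists_profile_up hR0 hR (norm_nonneg c)
    (abs_nonneg (z - x * y / 2)) hne (by rw [hρ]; exact hp)
  obtain ⟨θ', hθ', hX', hZ'⟩ : ∃ θ' ∈ Set.Icc (-(π / 2)) (π / 2), nilX r θ' = ‖c‖ ∧
      nilZ r θ' = z - x * y / 2 := by
    rcases abs_choice (z - x * y / 2) with h | h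
    · exact ⟨θ, ⟨by linarith [hθ.1, pi_pos], hθ.2⟩, hX, by rw [hZ, h]⟩
    · exact ⟨-θ, ⟨by linarith [hθ.2], by linarith [hθ.1, pi_pos]⟩, by rw [nilX_neg, hX],
        by rw [nilZ_neg, hZ, h, neg_neg]⟩
  refine ⟨r, hr, θ', hθ', c.arg, Complex.arg_mem_Ioc c, ?_⟩
  rw [hX', hZ', hx, hy, sin_two_mul]
  have e : z - x * y / 2 + 1 / 4 * ‖c‖ ^ 2 * (2 * sin c.arg * cos c.arg)
      = z - x * y / 2 + (‖c‖ * cos c.arg) * (‖c‖ * sin c.arg) / 2 := by ring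
  rw [e, hx, hy, sub_add_cancel]

theorem nilBall_eq_nilBallDual {R : ℝ} (hR0 : 0 < R) (hR : R ≤ π / 2) :
    nilBall R = nilBallDual R :=
  (nilBall_subset_dual hR0 hR).antisymm (dual_subset_nilBall hR0 hR)

/-! ### Large radii -/

/-- On the `z`-axis the ball does not reach above height `R`. Only vertical geodesics end on the
axis, since `|r sin θ / 2| < π` for the others. -/
lemma axis_le {R z : ℝ} (hR0 : 0 < R) (hR : R ≤ 2 * π) (h : (0, 0, z) ∈ nilBall R) : z ≤ R := by
  rcases h with h | ⟨r, hr, θ, hθ, φ, -, h⟩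
  · simp only [Prod.mk.injEq, true_and] at h
    rw [h]
    exact hR0.le
  simp only [Prod.mk.injEq] at h
  obtain ⟨hx, hy, hz⟩ := h
  have hX : nilX r θ = 0 := by
    have : nilX r θ ^ 2 = 0 := by
      linear_combination (-nilX r θ ^ 2) * sin_sq_add_cos_sq φ
        - (nilX r θ * cos φ) * hx - (nilX r θ * sin φ) * hy
    exact pow_eq_zero_iff two_ne_zero |>.1 this
  rw [hX] at hz
  have hπ := pi_pos
  obtain ⟨hr0, hr1⟩ := hr
  have hθ0 : θ ≠ 0 := by
    rintro rfl
    simp only [nilX, if_true] at hX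
    exact hr0.ne' hX
  have hs : sin θ ≠ 0 := by
    intro hs
    rcases lt_or_gt_of_ne hθ0 with h | h
    · exact (sin_neg_of_neg_of_neg_pi_lt h (by linarith [hθ.1])).ne hs
    · exact (sin_pos_of_pos_of_lt_pi h (by linarith [hθ.2])).ne' hs
  have hcos : cos θ = 0 := by
    by_contra hc
    have hsin : sin (r * sin θ / 2) = 0 := by
      rw [nilX, if_neg hθ0] at hX
      simpa [hc, hs] using hX
    have hlt : |sin θ| < 1 := by
      rw [← sq_lt_one_iff_abs_lt_one]
      have := sin_sq_add_cos_sq θ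
      have : 0 < cos θ ^ 2 := by positivity
      linarith
    obtain ⟨hl, hu⟩ := abs_lt.1 hlt
    have := (sin_eq_zero_iff_of_lt_of_lt (by nlinarith) (by nlinarith)).1 hsin
    have h3 : r * sin θ = 0 := by linarith
    exact (mul_ne_zero hr0.ne' hs) h3
  rw [nilZ, if_neg hθ0, hcos] at hz
  have : z = r * sin θ := by rw [hz]; ring
  rw [this]
  nlinarith [sin_le_one θ]

/-- The choice `R sin θ = π/2` makes `1 - cos (R sin θ) - sin (R sin θ)` vanish in `nilZ_add_sq`, and
the rest is `R + R (1 - sin θ)² / (2 sin θ)`. -/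
lemma not_convex_of_lt {R : ℝ} (hR1 : π / 2 < R) (hR : R ≤ 2 * π) : ¬ Convex ℝ (nilBall R) := by
  intro hconv
  have hπ := pi_pos
  have hR0 : 0 < R := by linarith
  have hs0 : 0 < π / 2 / R := by positivity
  have hs1 : π / 2 / R < 1 := (div_lt_one hR0).2 hR1
  set θ := arcsin (π / 2 / R) with hθ
  have hsin : sin θ = π / 2 / R := sin_arcsin (by linarith) hs1.le
  have hθ0 : 0 < θ := arcsin_pos.2 hs0
  have hθ1 : θ ≤ π / 2 := arcsin_le_pi_div_two _
  have hRs : R * sin θ = π / 2 := by rw [hsin]; field_simp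
  have hG := nilZ_add_sq (r := R) hθ0 hθ1
  rw [hRs, cos_pi_div_two, sin_pi_div_two] at hG
  -- The two ends lie over opposite points of the line `x = y`, at the same height.
  have hmem : ∀ φ ∈ Set.Ioc (-π) π, sin (2 * φ) = 1 →
      (nilX R θ * cos φ, nilX R θ * sin φ, nilZ R θ + nilX R θ ^ 2 / 4) ∈ nilBall R := by
    intro φ hφ h1
    refine Or.inr ⟨R, ⟨hR0, le_rfl⟩, θ, ⟨by linarith, hθ1⟩, φ, hφ, ?_⟩
    rw [h1]
    ring_nf
  have m1 := hmem (π / 4) ⟨by linarith, by linarith⟩ (by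
    rw [show 2 * (π / 4) = π / 2 by ring, sin_pi_div_two])
  have m2 := hmem (π / 4 - π) ⟨by linarith, by linarith⟩ (by
    rw [show 2 * (π / 4 - π) = π / 2 - 2 * π by ring, sin_sub_two_pi, sin_pi_div_two])
  have hmid := hconv m1 m2 (by norm_num : (0 : ℝ) ≤ 1 / 2) (by norm_num : (0 : ℝ) ≤ 1 / 2)
    (by norm_num)
  rw [cos_sub_pi, sin_sub_pi] at hmid
  simp only [Prod.smul_mk, Prod.mk_add_mk, smul_eq_mul] at hmid
  have hle := axis_le (z := nilZ R θ + nilX R θ ^ 2 / 4) hR0 hR (by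
    convert hmid using 2
    · ring
    · congr 1 <;> ring)
  have hsp : 0 < sin θ := by rw [hsin]; exact hs0
  have hs1' : sin θ < 1 := by rw [hsin]; exact hs1
  have e : nilZ R θ + nilX R θ ^ 2 / 4 - R = R * (1 - sin θ) ^ 2 / (2 * sin θ) := by
    rw [hG, ← hRs, cos_sq']
    field_simp
    ring
  have : 0 < R * (1 - sin θ) ^ 2 / (2 * sin θ) := by
    have : 0 < 1 - sin θ := by linarith
    positivity
  linarith

/-- The Nil geodesic ball of radius `R` is convex in the affine-Euclidean sense of
the model iff `R ≤ π/2`. -/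
theorem nilBall_convex_iff (R : ℝ) (hR : R ∈ Set.Ioc 0 (2 * π)) :
    Convex ℝ (nilBall R) ↔ R ≤ π / 2 := by
  refine ⟨fun h => ?_, fun h => ?_⟩
  · by_contra! hlt
    exact not_convex_of_lt hlt hR.2 h
  · rw [nilBall_eq_nilBallDual hR.1 h]
    exact convex_nilBallDual h
end

section
/- Let R ∈ (0, 2π] and define the rotational body B'(R) ⊆ ℝ³ as B'(R) = {(0,0,0)} ∪ { ( X(r,θ)·cos φ, X(r,θ)·sin φ, Z(r,θ) ) : r ∈ (0, R], θ ∈ [−π/2, π/2], φ ∈ (−π, π] }. Then B'(R) is a convex subset of ℝ³ if and only if R ≤ π. (B'(R) is the image of the Nil geodesic ball body of radius R under the quadratic mapping 𝓜(x,y,z) = (x, y, z − xy/2).) -/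
/-!
The body is rewritten in the parameter `w = r sin θ`, in which the sphere of radius `r` has profile
`X = √(r² - w²) sinc (w / 2)`, `Z = w + (r² - w²) (w - sin w) / (2 w²)`. The derivatives of `X` and
`Z` in `w` share a factor, and the slope of the profile of radius `R` is simply
`dZ/dX = -(√(R² - w²) / w) cos (w / 2)`.

If `R ≤ π`, both factors of this slope are nonnegative and monotone in `w`, so the profile is a
decreasing concave curve and lies below all of its tangent lines (`support_le`). Conversely every
point below the profile lies on the profile of some smaller radius (`exists_param`, by the
intermediate value theorem). The body is therefore cut out by the inequalities `ρ ≤ R` and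
`|z| + k ρ ≤ c` with `k ≥ 0`, where `ρ` is the distance to the axis (`mem_iff_support`), and these
are convex conditions because `ρ` is a seminorm.

If `R > π`, the slope at parameters `π < w < R` is positive: the sphere dips at the pole, and rises
above height `R` away from the axis. The midpoint of two opposite such points is on the axis above
height `R`, where the body has no points (`not_convex`).
-/

open Real

/-- The rotational body `B'(R)`, the 𝓜-image of the Nil geodesic ball of radius `R`. -/
noncomputable def nilBall' (R : ℝ) : Set (ℝ × ℝ × ℝ) :=
  {p | p = (0, 0, 0) ∨
    ∃ r ∈ Set.Ioc 0 R, ∃ θ ∈ Set.Icc (-(π / 2)) (π / 2), ∃ φ ∈ Set.Ioc (-π) π,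
      p = (nilX r θ * cos φ, nilX r θ * sin φ, nilZ r θ)}

/-! ### The profile in the parameter `w = r sin θ` -/

/-- The function `(w - sin w) / w²`; the junk value at `0` is the continuous extension `0`. -/
noncomputable def sinDefect (w : ℝ) : ℝ := (w - sin w) / w ^ 2

/-- The radius of the point of the sphere of radius `r` with parameter `w = r sin θ`. -/
noncomputable def radW (r w : ℝ) : ℝ := √(r ^ 2 - w ^ 2) * sinc (w / 2)

/-- The height of the point of the sphere of radius `r` with parameter `w = r sin θ`. -/
noncomputable def heightW (r w : ℝ) : ℝ := w + (r ^ 2 - w ^ 2) * sinDefect w / 2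

/-- Minus the slope `dZ/dX` of the profile curve of radius `R` at the parameter `w`. -/
noncomputable def slopeW (R w : ℝ) : ℝ := √(R ^ 2 - w ^ 2) / w * cos (w / 2)

lemma abs_sinDefect_le (w : ℝ) : |sinDefect w| ≤ |w| / 6 := by
  rcases eq_or_ne w 0 with rfl | hw
  · simp [sinDefect]
  · rw [sinDefect, abs_div, abs_pow, div_le_iff₀ (by positivity)]
    have := abs_sub_sin_le w
    nlinarith

lemma continuous_sinDefect : Continuous sinDefect := by
  rw [continuous_iff_continuousAt]
  intro x
  rcases eq_or_ne x 0 with rfl | hx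
  · have h0 : sinDefect 0 = 0 := by simp [sinDefect]
    rw [ContinuousAt, h0]
    refine squeeze_zero_norm (a := fun w => |w| / 6) (fun w => abs_sinDefect_le w) ?_
    have : Continuous fun w : ℝ => |w| / 6 := by fun_prop
    simpa using this.tendsto 0
  · unfold sinDefect
    exact ContinuousAt.div (by fun_prop) (by fun_prop) (by positivity)

lemma sinDefect_nonneg {w : ℝ} (hw : 0 ≤ w) : 0 ≤ sinDefect w :=
  div_nonneg (sub_nonneg.2 (sin_le hw)) (sq_nonneg w)

lemma continuous_radW (r : ℝ) : Continuous (radW r) := by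
  have := continuous_sinc
  unfold radW
  fun_prop

lemma continuous_heightW (r : ℝ) : Continuous (heightW r) := by
  have := continuous_sinDefect
  unfold heightW
  fun_prop

lemma sinc_pos_of_lt_pi {x : ℝ} (h0 : 0 ≤ x) (h1 : x < π) : 0 < sinc x := by
  rcases h0.eq_or_lt with rfl | h
  · simp
  · rw [sinc_of_ne_zero h.ne']
    exact div_pos (sin_pos_of_pos_of_lt_pi h h1) h

lemma sinc_nonneg_of_le_pi {x : ℝ} (h0 : 0 ≤ x) (h1 : x ≤ π) : 0 ≤ sinc x := by
  rcases h0.eq_or_lt with rfl | h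
  · simp
  · rw [sinc_of_ne_zero h.ne']
    exact div_nonneg (sin_nonneg_of_nonneg_of_le_pi h0 h1) h0

lemma radW_nonneg {r w : ℝ} (h0 : 0 ≤ w) (h1 : w ≤ 2 * π) : 0 ≤ radW r w :=
  mul_nonneg (sqrt_nonneg _) (sinc_nonneg_of_le_pi (by linarith) (by linarith))

lemma heightW_nonneg {r w : ℝ} (h0 : 0 ≤ w) (h1 : w ≤ r) : 0 ≤ heightW r w := by
  have := sinDefect_nonneg h0
  have : 0 ≤ r ^ 2 - w ^ 2 := by nlinarith
  unfold heightW
  positivity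

lemma radW_neg (r w : ℝ) : radW r (-w) = radW r w := by
  simp [radW, neg_div]

lemma heightW_neg (r w : ℝ) : heightW r (-w) = -heightW r w := by
  simp only [heightW, sinDefect, sin_neg]
  ring

lemma radW_zero {r : ℝ} (hr : 0 ≤ r) : radW r 0 = r := by
  simp [radW, sqrt_sq hr]

lemma heightW_zero (r : ℝ) : heightW r 0 = 0 := by
  simp [heightW, sinDefect]

lemma radW_self (r : ℝ) : radW r r = 0 := by simp [radW]

lemma heightW_self (r : ℝ) : heightW r r = r := by simp [heightW]

lemma nilX_eq {r θ : ℝ} (hr : 0 < r) (hθ : θ ∈ Set.Icc (-(π / 2)) (π / 2)) :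
    nilX r θ = radW r (r * sin θ) := by
  have hc : 0 ≤ cos θ := cos_nonneg_of_mem_Icc hθ
  have hs : √(r ^ 2 - (r * sin θ) ^ 2) = r * cos θ := by
    rw [← sqrt_sq (mul_nonneg hr.le hc)]
    congr 1
    linear_combination -r ^ 2 * sin_sq_add_cos_sq θ
  unfold nilX radW
  rw [hs]
  split_ifs with h
  · simp [h]
  · have h' : sin θ ≠ 0 := fun h0 =>
      h ((sin_eq_zero_iff_of_lt_of_lt (by linarith [hθ.1, pi_pos]) (by linarith [hθ.2, pi_pos])).1 h0)
    rw [sinc_of_ne_zero (by positivity)]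
    field_simp

lemma nilZ_eq {r θ : ℝ} (hr : 0 < r) (hθ : θ ∈ Set.Icc (-(π / 2)) (π / 2)) :
    nilZ r θ = heightW r (r * sin θ) := by
  unfold nilZ heightW sinDefect
  split_ifs with h
  · simp [h]
  · have h' : sin θ ≠ 0 := fun h0 =>
      h ((sin_eq_zero_iff_of_lt_of_lt (by linarith [hθ.1, pi_pos]) (by linarith [hθ.2, pi_pos])).1 h0)
    rw [cos_sq']
    field_simp
    ring

/-- In the parameters `(r, w)`, the body is the set of points whose distance to the axis is
`radW r w` and whose distance to the equatorial plane is `heightW r w`, with `0 ≤ w ≤ r ≤ R`. -/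
lemma mem_nilBall'_iff {R : ℝ} (hR : R ≤ 2 * π) (x y z : ℝ) :
    (x, y, z) ∈ nilBall' R ↔ (x = 0 ∧ y = 0 ∧ z = 0) ∨ ∃ r w, 0 < r ∧ 0 ≤ w ∧ w ≤ r ∧ r ≤ R ∧
      radW r w = ‖(x + y * Complex.I : ℂ)‖ ∧ heightW r w = |z| := by
  simp only [nilBall', Set.mem_ofPred_eq, Prod.mk.injEq]
  refine or_congr_right ⟨?_, ?_⟩
  · rintro ⟨r, ⟨hr, hrR⟩, θ, hθ, φ, -, rfl, rfl, rfl⟩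
    rw [nilX_eq hr hθ, nilZ_eq hr hθ]
    have hle : |r * sin θ| ≤ r := by
      rw [abs_mul, abs_of_pos hr]
      exact mul_le_of_le_one_right hr.le (abs_sin_le_one θ)
    have hX : radW r |r * sin θ| = radW r (r * sin θ) := by
      rcases abs_choice (r * sin θ) with h | h <;> rw [h]
      rw [radW_neg]
    have hX0 := radW_nonneg (r := r) (abs_nonneg (r * sin θ)) (by linarith)
    have hZ0 := heightW_nonneg (abs_nonneg (r * sin θ)) hle
    refine ⟨r, |r * sin θ|, hr, abs_nonneg _, hle, hrR, ?_, ?_⟩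
    · rw [Complex.norm_add_mul_I, ← hX]
      rw [show (radW r |r * sin θ| * cos φ) ^ 2 + (radW r |r * sin θ| * sin φ) ^ 2
        = (radW r |r * sin θ|) ^ 2 by
          linear_combination (radW r |r * sin θ|) ^ 2 * sin_sq_add_cos_sq φ, sqrt_sq hX0]
    · rw [← abs_of_nonneg hZ0]
      rcases abs_choice (r * sin θ) with h | h <;> rw [h]
      rw [heightW_neg, abs_neg]
  · rintro ⟨r, w, hr, hw, hwr, hrR, hX, hZ⟩
    obtain ⟨s, hs, hsr, hXs, hZs⟩ : ∃ s, -r ≤ s ∧ s ≤ r ∧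
        radW r s = ‖(x + y * Complex.I : ℂ)‖ ∧ heightW r s = z := by
      rcases abs_choice z with h | h
      · exact ⟨w, by linarith, hwr, hX, hZ.trans h⟩
      · exact ⟨-w, by linarith, by linarith, by rw [radW_neg, hX], by rw [heightW_neg, hZ, h, neg_neg]⟩
    have hθ := arcsin_mem_Icc (s / r)
    have hsin : r * sin (arcsin (s / r)) = s := by
      rw [sin_arcsin (by rw [le_div_iff₀ hr]; linarith) (by rw [div_le_iff₀ hr]; linarith)]
      field_simp
    refine ⟨r, ⟨hr, hrR⟩, arcsin (s / r), hθ, _, Complex.arg_mem_Ioc (x + y * Complex.I), ?_⟩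
    rw [nilX_eq hr hθ, nilZ_eq hr hθ, hsin, hXs, hZs, Complex.norm_mul_cos_arg,
      Complex.norm_mul_sin_arg]
    simp

/-! ### Radii greater than `π` -/

/-- Past `π` the profile has a dip at the pole: the height of the sphere rises above `R`
away from the axis, while on the axis the body only reaches height `R`. -/
lemma not_convex {R : ℝ} (h1 : π < R) (h2 : R ≤ 2 * π) : ¬ Convex ℝ (nilBall' R) := by
  intro hc
  have hpi := pi_pos
  obtain ⟨w, hw, hwR⟩ := exists_between h1
  have hw0 : 0 < w := by linarith
  have hsin : sin w < 0 := by
    rw [← sin_sub_two_pi w] 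
    exact sin_neg_of_neg_of_neg_pi_lt (by linarith) (by linarith)
  -- As `sin w < 0`, `(w - sin w) / w² ≥ 1 / w`, so `heightW R w - R ≥ (R - w)² / (2 w) > 0`.
  have hZ : R < heightW R w := by
    have h : 1 / w ≤ sinDefect w := by
      rw [sinDefect, div_le_div_iff₀ hw0 (by positivity)]
      nlinarith
    have h' : w * (1 / w) = 1 := by field_simp
    have h3 : (R ^ 2 - w ^ 2) * (1 / w) ≤ (R ^ 2 - w ^ 2) * sinDefect w :=
      mul_le_mul_of_nonneg_left h (by nlinarith)
    have h4 : (R ^ 2 - w ^ 2) * (1 / w) = 2 * (R - w) + (R - w) ^ 2 * (1 / w) := by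
      field_simp
      ring
    have h5 : 0 < (R - w) ^ 2 * (1 / w) := by
      have : 0 < R - w := by linarith
      positivity
    unfold heightW
    linarith
  have hX0 := radW_nonneg (r := R) hw0.le (by linarith)
  have hmem (ε : ℝ) (hε : |ε| = 1) : (ε * radW R w, (0 : ℝ), heightW R w) ∈ nilBall' R := by
    rw [mem_nilBall'_iff h2]
    refine Or.inr ⟨R, w, by linarith, hw0.le, hwR.le, le_rfl, ?_, ?_⟩
    · rw [Complex.norm_add_mul_I]
      simp [sqrt_sq_eq_abs, hε, abs_of_nonneg hX0]
    · rw [abs_of_pos (by linarith)]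
  have hmid := hc (hmem 1 (by simp)) (hmem (-1) (by simp)) (a := 1 / 2) (b := 1 / 2)
    (by norm_num) (by norm_num) (by norm_num)
  have he : (1 / 2 : ℝ) • (1 * radW R w, (0 : ℝ), heightW R w) +
      (1 / 2 : ℝ) • (-1 * radW R w, (0 : ℝ), heightW R w) = (0, 0, heightW R w) := by
    ext <;> simp; ring
  rw [he, mem_nilBall'_iff h2] at hmid
  rcases hmid with ⟨-, -, h⟩ | ⟨r, v, hr, hv, hvr, hrR, hX, hH⟩
  · linarith
  · have hvr' : v = r := by
      simp only [Complex.ofReal_zero, zero_mul, add_zero, norm_zero] at hX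
      rcases mul_eq_zero.1 hX with h | h
      · rw [sqrt_eq_zero (by nlinarith)] at h
        nlinarith
      -- `sinc (v / 2)` vanishes only at `v = 2π`, which forces `v = r = R = 2π`.
      · by_contra hne
        have : v < r := lt_of_le_of_ne hvr hne
        exact (sinc_pos_of_lt_pi (x := v / 2) (by linarith) (by linarith)).ne' h
    rw [hvr', heightW_self, abs_of_pos (by linarith)] at hH
    linarith

/-! ### Tangent lines of the profile -/

/-- The common factor of the derivatives of `radW R` and `heightW R`. -/
noncomputable def profFactor (R v : ℝ) : ℝ :=
  v ^ 3 * cos (v / 2) + R ^ 2 * (2 * sin (v / 2) - v * cos (v / 2))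

lemma profFactor_nonneg {R v : ℝ} (h0 : 0 < v) (h1 : v < π) : 0 ≤ profFactor R v := by
  have hc : 0 < cos (v / 2) := cos_pos_of_mem_Ioo ⟨by linarith, by linarith⟩
  have ht := lt_tan (x := v / 2) (by linarith) (by linarith)
  rw [tan_eq_sin_div_cos, lt_div_iff₀ hc] at ht
  have : 0 ≤ 2 * sin (v / 2) - v * cos (v / 2) := by linarith
  unfold profFactor
  positivity

lemma hasDerivAt_radW {R v : ℝ} (h0 : 0 < v) (h1 : v < R) :
    HasDerivAt (radW R) (-(profFactor R v / (v ^ 2 * √(R ^ 2 - v ^ 2)))) v := by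
  have hpos : 0 < R ^ 2 - v ^ 2 := by nlinarith
  have hs := sqrt_pos.2 hpos
  have hd : HasDerivAt (fun w : ℝ => w / 2) (1 / 2) v := (hasDerivAt_id v).div_const 2
  have hsin : HasDerivAt (fun w => √(R ^ 2 - w ^ 2) * (sin (w / 2) / (w / 2))) _ v :=
    ((((hasDerivAt_id v).pow 2).const_sub (R ^ 2)).sqrt hpos.ne').mul
      (hd.sin.div hd (by positivity))
  refine HasDerivAt.congr_deriv (hsin.congr_of_eventuallyEq ?_) ?_
  · filter_upwards [lt_mem_nhds h0] with w hw
    rw [radW, sinc_of_ne_zero (by positivity)]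
  · have hsq := sq_sqrt hpos.le
    simp only [id, Pi.pow_apply, profFactor]
    set S := √(R ^ 2 - v ^ 2)
    have hR : R ^ 2 = S ^ 2 + v ^ 2 := by linarith
    rw [hR]
    field_simp
    ring

lemma hasDerivAt_heightW {R v : ℝ} (h0 : 0 < v) :
    HasDerivAt (heightW R) (cos (v / 2) * profFactor R v / v ^ 3) v := by
  have hq : HasDerivAt sinDefect _ v :=
    ((hasDerivAt_id v).sub (hasDerivAt_sin v)).div ((hasDerivAt_id v).pow 2) (by simp; positivity)
  have h : HasDerivAt (heightW R) _ v := (hasDerivAt_id v).add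
    (((((hasDerivAt_id v).pow 2).const_sub (R ^ 2)).mul hq).div_const 2)
  refine h.congr_deriv ?_
  have e1 : sin v = 2 * sin (v / 2) * cos (v / 2) := by
    rw [← sin_two_mul]; congr 1; ring
  have e2 : cos v = 2 * cos (v / 2) ^ 2 - 1 := by
    rw [← cos_two_mul]; congr 1; ring
  simp only [id, Pi.pow_apply, Pi.sub_apply, profFactor, sinDefect, e1, e2]
  field_simp
  ring

lemma radW_antitoneOn {R : ℝ} (hR : R ≤ π) : AntitoneOn (radW R) (Set.Icc 0 R) := by
  refine antitoneOn_of_hasDerivWithinAt_nonpos (convex_Icc _ _) (continuous_radW R).continuousOn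
    (f' := fun v => -(profFactor R v / (v ^ 2 * √(R ^ 2 - v ^ 2)))) ?_ ?_
  · rw [interior_Icc]
    exact fun v hv => (hasDerivAt_radW hv.1 hv.2).hasDerivWithinAt
  · rw [interior_Icc]
    intro v hv
    have := profFactor_nonneg (R := R) hv.1 (hv.2.trans_le hR)
    exact neg_nonpos.2 (by positivity)

/-- The slope of the profile is monotone as long as `R ≤ π`: both factors of `slopeW` are
then nonnegative and decreasing. -/
lemma slopeW_le {R v w : ℝ} (hR : R ≤ π) (h0 : 0 < v) (hvw : v ≤ w) (hw : w ≤ R) :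
    slopeW R w ≤ slopeW R v := by
  have hc : 0 ≤ cos (w / 2) := cos_nonneg_of_mem_Icc ⟨by linarith, by linarith⟩
  have hcc : cos (w / 2) ≤ cos (v / 2) :=
    cos_le_cos_of_nonneg_of_le_pi (by linarith) (by linarith [pi_pos]) (by linarith)
  unfold slopeW
  gcongr

lemma slopeW_nonneg {R w : ℝ} (hR : R ≤ π) (h0 : 0 < w) (hw : w ≤ R) : 0 ≤ slopeW R w := by
  have hc : 0 ≤ cos (w / 2) := cos_nonneg_of_mem_Icc ⟨by linarith, by linarith⟩
  unfold slopeW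
  positivity

/-- The linear functional `Z + slopeW R w * X`, whose level line is tangent to the profile at
the parameter `w`, has derivative along the profile proportional to `slopeW R v - slopeW R w`. -/
lemma hasDerivAt_support {R v : ℝ} (w : ℝ) (h0 : 0 < v) (h1 : v < R) :
    HasDerivAt (fun v => heightW R v + slopeW R w * radW R v)
      (profFactor R v / (v ^ 2 * √(R ^ 2 - v ^ 2)) * (slopeW R v - slopeW R w)) v := by
  refine ((hasDerivAt_heightW h0).add
    ((hasDerivAt_radW h0 h1).const_mul (slopeW R w))).congr_deriv ?_
  have hs : 0 < √(R ^ 2 - v ^ 2) := sqrt_pos.2 (by nlinarith)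
  have e : cos (v / 2) * profFactor R v / v ^ 3
      = profFactor R v / (v ^ 2 * √(R ^ 2 - v ^ 2)) * slopeW R v := by
    unfold slopeW
    field_simp
  rw [e]
  ring

/-- The profile of radius `R ≤ π` lies below each of its tangent lines. -/
lemma support_le {R v w : ℝ} (hR : R ≤ π) (hw0 : 0 < w) (hw : w ≤ R) (hv0 : 0 ≤ v) (hv : v ≤ R) :
    heightW R v + slopeW R w * radW R v ≤ heightW R w + slopeW R w * radW R w := by
  have hcont : Continuous (fun v => heightW R v + slopeW R w * radW R v) :=
    (continuous_heightW R).add (continuous_const.mul (continuous_radW R))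
  have hfac : ∀ u, 0 < u → u < R → 0 ≤ profFactor R u / (u ^ 2 * √(R ^ 2 - u ^ 2)) :=
    fun u h0 h1 => div_nonneg (profFactor_nonneg h0 (h1.trans_le hR)) (by positivity)
  rcases le_total v w with hvw | hvw
  · refine monotoneOn_of_hasDerivWithinAt_nonneg (convex_Icc v w) hcont.continuousOn
      (f' := fun u => profFactor R u / (u ^ 2 * √(R ^ 2 - u ^ 2)) * (slopeW R u - slopeW R w))
      ?_ ?_ (Set.left_mem_Icc.2 hvw) (Set.right_mem_Icc.2 hvw) hvw <;> rw [interior_Icc] <;>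
      intro u hu
    · exact (hasDerivAt_support w (hv0.trans_lt hu.1) (hu.2.trans_le hw)).hasDerivWithinAt
    · exact mul_nonneg (hfac u (hv0.trans_lt hu.1) (hu.2.trans_le hw))
        (sub_nonneg.2 (slopeW_le hR (hv0.trans_lt hu.1) hu.2.le hw))
  · refine antitoneOn_of_hasDerivWithinAt_nonpos (convex_Icc w v) hcont.continuousOn
      (f' := fun u => profFactor R u / (u ^ 2 * √(R ^ 2 - u ^ 2)) * (slopeW R u - slopeW R w))
      ?_ ?_ (Set.left_mem_Icc.2 hvw) (Set.right_mem_Icc.2 hvw) hvw <;> rw [interior_Icc] <;>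
      intro u hu
    · exact (hasDerivAt_support w (hw0.trans hu.1) (hu.2.trans_le hv)).hasDerivWithinAt
    · exact mul_nonpos_of_nonneg_of_nonpos (hfac u (hw0.trans hu.1) (hu.2.trans_le hv))
        (sub_nonpos.2 (slopeW_le hR hw0 hu.1.le (hu.2.le.trans hv)))

lemma radW_mono {r R w : ℝ} (hr : 0 < r) (hrR : r ≤ R) (h0 : 0 ≤ w) (h1 : w ≤ 2 * π) :
    radW r w ≤ radW R w := by
  refine mul_le_mul_of_nonneg_right (sqrt_le_sqrt ?_)
    (sinc_nonneg_of_le_pi (by linarith) (by linarith))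
  gcongr

lemma heightW_mono {r R w : ℝ} (hr : 0 < r) (hrR : r ≤ R) (h0 : 0 ≤ w) :
    heightW r w ≤ heightW R w := by
  have := sinDefect_nonneg h0
  unfold heightW
  gcongr

/-! ### The body as an intersection of convex sets -/

/-- Below the profile curve of radius `R`, every point lies on the profile of some smaller
radius: on the vertical line at distance `ρ` from the axis, the height grows continuously from `0`
when the radius and the parameter `v` vary so as to keep `X = ρ`. -/
lemma exists_param {R w ρ z : ℝ} (hR : R ≤ π) (hw0 : 0 ≤ w) (hw : w ≤ R)
    (hρ : radW R w = ρ) (hz0 : 0 ≤ z) (hz : z ≤ heightW R w) :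
    ∃ r v, 0 ≤ v ∧ v ≤ r ∧ r ≤ R ∧ radW r v = ρ ∧ heightW r v = z := by
  have hpi := pi_pos
  have hρ0 : 0 ≤ ρ := hρ ▸ radW_nonneg hw0 (by linarith)
  have hsinc : ∀ v ∈ Set.Icc 0 w, 0 < sinc (v / 2) := fun v hv =>
    sinc_pos_of_lt_pi (by linarith [hv.1]) (by linarith [hv.2])
  -- The height above the equator as a function of `v` when `X = ρ` is kept fixed.
  let f : ℝ → ℝ := fun v => v + (ρ / sinc (v / 2)) ^ 2 * sinDefect v / 2
  have hf : ContinuousOn f (Set.Icc 0 w) := by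
    have h1 : ContinuousOn (fun v => ρ / sinc (v / 2)) (Set.Icc 0 w) :=
      continuousOn_const.div (continuous_sinc.comp (by fun_prop)).continuousOn
        fun v hv => (hsinc v hv).ne'
    exact continuousOn_id.add (((h1.pow 2).mul continuous_sinDefect.continuousOn).div_const 2)
  have hRw : 0 ≤ R ^ 2 - w ^ 2 := by nlinarith
  have hfw : f w = heightW R w := by
    have := hsinc w ⟨hw0, le_rfl⟩
    have h : ρ / sinc (w / 2) = √(R ^ 2 - w ^ 2) := by
      rw [← hρ, radW]; field_simp
    simp only [f, h, sq_sqrt hRw, heightW]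
  have hf0 : f 0 = 0 := by simp [f, sinDefect]
  obtain ⟨v, hv, hfv⟩ := intermediate_value_Icc hw0 hf (show z ∈ Set.Icc (f 0) (f w) by
    rw [hf0, hfw]; exact ⟨hz0, hz⟩)
  have hsv := hsinc v hv
  have hρR : ρ / sinc (v / 2) ≤ √(R ^ 2 - v ^ 2) := by
    rw [div_le_iff₀ hsv, ← hρ]
    exact radW_antitoneOn hR ⟨hv.1, hv.2.trans hw⟩ ⟨hw0, hw⟩ hv.2
  have hq : 0 ≤ ρ / sinc (v / 2) := by positivity
  have hRv : 0 ≤ R ^ 2 - v ^ 2 := by nlinarith [hv.1, hv.2]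
  have hsq : √(v ^ 2 + (ρ / sinc (v / 2)) ^ 2) ^ 2 = v ^ 2 + (ρ / sinc (v / 2)) ^ 2 :=
    sq_sqrt (by positivity)
  refine ⟨√(v ^ 2 + (ρ / sinc (v / 2)) ^ 2), v, hv.1, ?_, ?_, ?_, ?_⟩
  · exact le_sqrt_of_sq_le (by nlinarith)
  · refine sqrt_le_iff.2 ⟨by linarith, ?_⟩
    have := (le_sqrt hq hRv).1 hρR
    linarith
  · rw [radW, hsq, add_sub_cancel_left, sqrt_sq hq]
    field_simp
  · rw [heightW, hsq, add_sub_cancel_left]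
    exact hfv

/-- For `R ≤ π` the body is cut out by the tangent cones of its profile curve (together with the
cylinder of radius `R`), each given by a convex inequality. -/
lemma mem_iff_support {R : ℝ} (hR0 : 0 < R) (hR : R ≤ π) (x y z : ℝ) :
    (x, y, z) ∈ nilBall' R ↔ ‖(x + y * Complex.I : ℂ)‖ ≤ R ∧ ∀ w, 0 < w → w ≤ R →
      |z| + slopeW R w * ‖(x + y * Complex.I : ℂ)‖ ≤ heightW R w + slopeW R w * radW R w := by
  have hpi := pi_pos
  rw [mem_nilBall'_iff (by linarith)]
  constructor
  · rintro (⟨rfl, rfl, rfl⟩ | ⟨r, v, hr, hv, hvr, hrR, hX, hZ⟩)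
    · refine ⟨by simpa using hR0.le, fun w h0 hw => ?_⟩
      have h1 := heightW_nonneg h0.le hw
      have h2 := slopeW_nonneg hR h0 hw
      have h3 := radW_nonneg (r := R) h0.le (by linarith)
      simp only [Complex.ofReal_zero, zero_mul, add_zero, norm_zero, abs_zero, mul_zero]
      positivity
    · have hXle := radW_mono hr hrR hv (by linarith)
      rw [← hX, ← hZ]
      refine ⟨hXle.trans ?_, fun w h0 hw => le_trans ?_ (support_le hR h0 hw hv (hvr.trans hrR))⟩
      · rw [← radW_zero hR0.le]
        conv_lhs => rw [radW_zero hR0.le]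
        exact radW_antitoneOn hR ⟨le_rfl, hR0.le⟩ ⟨hv, hvr.trans hrR⟩ hv
      · exact add_le_add (heightW_mono hr hrR hv)
          (mul_le_mul_of_nonneg_left hXle (slopeW_nonneg hR h0 hw))
  · rintro ⟨hρ, hsup⟩
    obtain ⟨w, hw, hwρ⟩ := intermediate_value_Icc' hR0.le (continuous_radW R).continuousOn
      (show ‖(x + y * Complex.I : ℂ)‖ ∈ Set.Icc (radW R R) (radW R 0) by
        rw [radW_self, radW_zero hR0.le]; exact ⟨norm_nonneg _, hρ⟩)
    have hz : |z| ≤ heightW R w := by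
      rcases hw.1.eq_or_lt with rfl | h0
      -- On the equator the tangent line is vertical; the nearby tangent lines still give `z = 0`.
      · have hlim : Filter.Tendsto (heightW R) (nhdsWithin 0 (Set.Ioi 0)) (nhds (heightW R 0)) :=
          (continuous_heightW R).continuousWithinAt
        refine ge_of_tendsto hlim ?_
        filter_upwards [Ioc_mem_nhdsGT hR0] with u hu
        have h1 := hsup u hu.1 hu.2
        have h2 := radW_antitoneOn hR ⟨le_rfl, hR0.le⟩ ⟨hu.1.le, hu.2⟩ hu.1.le
        rw [hwρ] at h2
        have := mul_le_mul_of_nonneg_left h2 (slopeW_nonneg hR hu.1 hu.2)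
        linarith
      · have := hsup w h0 hw.2
        rw [← hwρ] at this
        linarith
    obtain ⟨r, v, hv, hvr, hrR, hX, hZ⟩ := exists_param hR hw.1 hw.2 hwρ (abs_nonneg z) hz
    rcases (hv.trans hvr).eq_or_lt with h | hr
    · left
      obtain rfl : v = 0 := by linarith
      subst h
      rw [radW_self, Complex.norm_add_mul_I, eq_comm, sqrt_eq_zero (by positivity)] at hX
      rw [heightW_self, eq_comm, abs_eq_zero] at hZ
      exact ⟨by nlinarith, by nlinarith, hZ⟩
    · exact Or.inr ⟨r, v, hr, hv, hvr, hrR, hX, hZ⟩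

lemma convex_of_le_pi {R : ℝ} (hR0 : 0 < R) (hR : R ≤ π) : Convex ℝ (nilBall' R) := by
  rintro ⟨x, y, z⟩ hp ⟨x', y', z'⟩ hq a b ha hb hab
  simp only [Prod.smul_mk, Prod.mk_add_mk, smul_eq_mul]
  rw [mem_iff_support hR0 hR] at hp hq ⊢
  have hn : ‖((a * x + b * x' : ℝ) + (a * y + b * y' : ℝ) * Complex.I : ℂ)‖
      ≤ a * ‖(x + y * Complex.I : ℂ)‖ + b * ‖(x' + y' * Complex.I : ℂ)‖ := by
    have e : ((a * x + b * x' : ℝ) + (a * y + b * y' : ℝ) * Complex.I : ℂ)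
        = a • (x + y * Complex.I : ℂ) + b • (x' + y' * Complex.I : ℂ) := by
      simp only [Complex.real_smul]
      push_cast
      ring
    rw [e]
    refine (norm_add_le _ _).trans_eq ?_
    rw [norm_smul, norm_smul, norm_of_nonneg ha, norm_of_nonneg hb]
  have hz : |a * z + b * z'| ≤ a * |z| + b * |z'| := by
    refine (abs_add_le _ _).trans_eq ?_
    rw [abs_mul, abs_mul, abs_of_nonneg ha, abs_of_nonneg hb]
  obtain rfl : b = 1 - a := by linarith
  refine ⟨?_, fun w h0 hw => ?_⟩
  · have h1 := mul_le_mul_of_nonneg_left hp.1 ha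
    have h2 := mul_le_mul_of_nonneg_left hq.1 hb
    linarith
  · have h1 := mul_le_mul_of_nonneg_left (hp.2 w h0 hw) ha
    have h2 := mul_le_mul_of_nonneg_left (hq.2 w h0 hw) hb
    have h3 := mul_le_mul_of_nonneg_left hn (slopeW_nonneg hR h0 hw)
    linarith

/-- The 𝓜-image of the Nil geodesic ball of radius `R` is convex in the Euclidean
sense iff `R ≤ π`. -/
theorem nilBall'_convex_iff (R : ℝ) (hR : R ∈ Set.Ioc 0 (2 * π)) :
    Convex ℝ (nilBall' R) ↔ R ≤ π :=
  ⟨fun hc => not_lt.1 fun h => not_convex h hR.2 hc, convex_of_le_pi hR.1⟩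
end

section
/- For every fixed R ∈ (0, π], the function θ ↦ Z(R, θ) is monotone increasing on the interval (0, π/2]; equivalently, the partial derivative ∂Z/∂θ (R, θ) is nonnegative for every θ ∈ (0, π/2). -/
/-!
Since `cos² θ = 1 - sin² θ`, the height is a function of `s = sin θ` alone on `(0, π/2]`.
Its derivative in `s` is `(x (1 + cos x) s² + (2 sin x - x (1 + cos x))) / (2 s³)` with
`x = R s ∈ (0, π]`. The first summand of the numerator is clearly nonnegative, and in half angles
the second is `4 cos (x/2) (sin (x/2) - (x/2) cos (x/2))`, which is nonnegative because
`u ≤ tan u` on `[0, π/2)`. Multiplying by `ds/dθ = cos θ ≥ 0` keeps the sign.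
-/

open Real

/-- The half-angle form of `x / 2 ≤ tan (x / 2)`, valid up to the endpoint `x = π`. -/
lemma mul_one_add_cos_le {x : ℝ} (h0 : 0 ≤ x) (hpi : x ≤ π) :
    x * (1 + cos x) ≤ 2 * sin x := by
  rcases hpi.eq_or_lt with rfl | hlt
  · simp
  have hc : 0 < cos (x / 2) := cos_pos_of_mem_Ioo ⟨by linarith [pi_pos], by linarith⟩
  have ht := le_tan (x := x / 2) (by linarith) (by linarith)
  rw [tan_eq_sin_div_cos, le_div_iff₀ hc] at ht
  have e1 : cos x = 2 * cos (x / 2) ^ 2 - 1 := by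
    rw [← cos_two_mul]; congr 1; ring
  have e2 : sin x = 2 * sin (x / 2) * cos (x / 2) := by
    rw [← sin_two_mul]; congr 1; ring
  rw [e1, e2]
  nlinarith [mul_le_mul_of_nonneg_right ht hc.le]

/-- The height profile as a function of `s = sin θ`. -/
noncomputable def nilHeight (R s : ℝ) : ℝ :=
  R * s + R * (1 - s ^ 2) / (2 * s) - ((1 - s ^ 2) / (2 * s ^ 2)) * sin (R * s)

lemma nilZ_eq_nilHeight (R : ℝ) {θ : ℝ} (h : θ ≠ 0) : nilZ R θ = nilHeight R (sin θ) := by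
  rw [nilZ, if_neg h, nilHeight, cos_sq']

lemma hasDerivAt_nilHeight (R : ℝ) {s : ℝ} (hs : s ≠ 0) :
    HasDerivAt (nilHeight R)
      ((R * s * (1 + cos (R * s)) * s ^ 2 + (2 * sin (R * s) - R * s * (1 + cos (R * s)))) /
        (2 * s ^ 3)) s := by
  have hid := hasDerivAt_id' s
  have hRs := hid.const_mul R
  have hq := (hasDerivAt_pow 2 s).const_sub 1
  have h1 := (hq.const_mul R).fun_div (hid.const_mul 2) (by positivity)
  have h2 := hq.fun_div ((hasDerivAt_pow 2 s).const_mul 2) (by positivity)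
  have h := (hRs.fun_add h1).fun_sub (h2.fun_mul hRs.sin)
  refine h.congr_deriv ?_
  field_simp
  ring

lemma hasDerivAt_nilZ (R : ℝ) {θ : ℝ} (h : θ ≠ 0) (hs : sin θ ≠ 0) :
    HasDerivAt (fun θ => nilZ R θ)
      ((R * sin θ * (1 + cos (R * sin θ)) * sin θ ^ 2 +
        (2 * sin (R * sin θ) - R * sin θ * (1 + cos (R * sin θ)))) / (2 * sin θ ^ 3) * cos θ) θ := by
  refine ((hasDerivAt_nilHeight R hs).comp θ (hasDerivAt_sin θ)).congr_of_eventuallyEq ?_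
  filter_upwards [isOpen_ne.mem_nhds h] with t ht
  exact nilZ_eq_nilHeight R ht

/-- For `R ∈ (0, π]` the height profile `θ ↦ Z(R, θ)` is monotone increasing on
`(0, π/2]`; equivalently its derivative is nonnegative on `(0, π/2)`. -/
theorem nilZ_monotone_of_le_pi (R : ℝ) (hR : R ∈ Set.Ioc 0 π) :
    MonotoneOn (fun θ => nilZ R θ) (Set.Ioc 0 (π / 2)) ∧
      ∀ θ ∈ Set.Ioo 0 (π / 2), 0 ≤ deriv (fun θ => nilZ R θ) θ := by
  have hsin : ∀ θ ∈ Set.Ioc 0 (π / 2), 0 < sin θ := fun θ hθ =>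
    sin_pos_of_pos_of_lt_pi hθ.1 (by linarith [hθ.2, pi_pos])
  have hderiv : ∀ θ ∈ Set.Ioo 0 (π / 2), 0 ≤ deriv (fun θ => nilZ R θ) θ := by
    intro θ hθ
    have hs := hsin θ ⟨hθ.1, hθ.2.le⟩
    rw [(hasDerivAt_nilZ R hθ.1.ne' hs.ne').deriv]
    have hx0 : 0 ≤ R * sin θ := mul_nonneg hR.1.le hs.le
    have hxpi : R * sin θ ≤ π :=
      (mul_le_of_le_one_right hR.1.le (sin_le_one θ)).trans hR.2
    have hcos : 0 ≤ 1 + cos (R * sin θ) := by linarith [neg_one_le_cos (R * sin θ)]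
    have hc : 0 ≤ cos θ := cos_nonneg_of_mem_Icc ⟨by linarith [hθ.1, pi_pos], hθ.2.le⟩
    have hmain := sub_nonneg.2 (mul_one_add_cos_le hx0 hxpi)
    positivity
  refine ⟨monotoneOn_of_deriv_nonneg (convex_Ioc _ _) ?_ ?_ ?_, hderiv⟩
  · exact fun θ hθ =>
      (hasDerivAt_nilZ R hθ.1.ne' (hsin θ hθ).ne').continuousAt.continuousWithinAt
  · rw [interior_Ioc]
    exact fun θ hθ => (hasDerivAt_nilZ R hθ.1.ne'
      (hsin θ ⟨hθ.1, hθ.2.le⟩).ne').differentiableAt.differentiableWithinAt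
  · rw [interior_Ioc]
    exact hderiv
end

section
/- For every fixed R ∈ (π, 2π], there exists θ ∈ (0, π/2) such that the partial derivative ∂Z/∂θ (R, θ) = 0; in particular, the function θ ↦ Z(R, θ) is not strictly monotone on (0, π/2). -/
/-!
Put `f(θ) = Z(R, θ)`. At the right end, `f(π/2) = R`. At the angle `b` with `sin b = π / R` the sine
term of `Z` vanishes and `f(b) = π/2 + R²/(2π)`, so `f(b) - R = (R - π)²/(2π) > 0`. At the angle `a`
with `sin a = 1/8`, the bound `x - x³/6 < sin x` gives `f(a) < R`. As `a < b < π/2`, the maximum of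
the continuous function `f` on `[a, π/2]` is attained at an interior point; there the derivative
vanishes, and a function with an interior maximum is strictly monotone in neither direction.
-/

open Real

lemma nilZ_pi_div_two (R : ℝ) : nilZ R (π / 2) = R := by
  have : π / 2 ≠ 0 := by positivity
  simp [nilZ]

/-- `Z(R, ·)` in terms of `s = sin θ`. -/
lemma nilZ_arcsin (R : ℝ) {s : ℝ} (h0 : 0 < s) (h1 : s ≤ 1) :
    nilZ R (arcsin s) =
      R * s + R * (1 - s ^ 2) / (2 * s) - (1 - s ^ 2) / (2 * s ^ 2) * sin (R * s) := by
  have h : arcsin s ≠ 0 := (arcsin_pos.2 h0).ne'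
  rw [nilZ, if_neg h, cos_sq', sin_arcsin (by linarith) h1]

lemma lt_nilZ_arcsin_pi_div {R : ℝ} (hR : π < R) : R < nilZ R (arcsin (π / R)) := by
  have hp := pi_pos
  have hR0 : 0 < R := hp.trans hR
  rw [nilZ_arcsin R (by positivity) ((div_le_one hR0).2 hR.le), mul_div_cancel₀ _ hR0.ne', sin_pi]
  have h : π + R * (1 - (π / R) ^ 2) / (2 * (π / R)) - (1 - (π / R) ^ 2) / (2 * (π / R) ^ 2) * 0
      = R + (R - π) ^ 2 / (2 * π) := by
    field_simp
    ring
  rw [h]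
  have : 0 < (R - π) ^ 2 / (2 * π) := by
    have : 0 < R - π := by linarith
    positivity
  linarith

lemma nilZ_arcsin_lt {R : ℝ} (h0 : 0 < R) (h7 : R < 7) : nilZ R (arcsin (1 / 8)) < R := by
  rw [nilZ_arcsin R (by norm_num) (by norm_num)]
  have h := sin_gt_sub_cube (x := R * (1 / 8)) (by linarith)
  have : R ^ 3 ≤ 49 * R := by nlinarith [mul_pos h0 (by linarith : 0 < 7 - R)]
  norm_num at h ⊢
  nlinarith

lemma continuousOn_nilZ (R : ℝ) : ContinuousOn (fun θ => nilZ R θ) (Set.Ioo 0 π) := by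
  have hs : ∀ θ ∈ Set.Ioo 0 π, sin θ ≠ 0 := fun θ h => (sin_pos_of_mem_Ioo h).ne'
  have : ContinuousOn (fun θ => R * sin θ + R * cos θ ^ 2 / (2 * sin θ) -
      (cos θ ^ 2 / (2 * sin θ ^ 2)) * sin (R * sin θ)) (Set.Ioo 0 π) := by
    refine ContinuousOn.sub (ContinuousOn.add (by fun_prop) (ContinuousOn.div (by fun_prop)
      (by fun_prop) ?_)) (ContinuousOn.mul (ContinuousOn.div (by fun_prop) (by fun_prop) ?_)
      (by fun_prop))
    · intro θ h
      simpa using hs θ h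
    · intro θ h
      simpa using hs θ h
  exact this.congr fun θ h => by simp only [nilZ, if_neg h.1.ne']

/-- For `R ∈ (π, 2π]` the derivative of the height profile `θ ↦ Z(R, θ)` vanishes
somewhere in `(0, π/2)`; in particular the profile is not strictly monotone there. -/
theorem nilZ_not_strictMono_of_gt_pi (R : ℝ) (hR : R ∈ Set.Ioc π (2 * π)) :
    (∃ θ ∈ Set.Ioo 0 (π / 2), deriv (fun θ => nilZ R θ) θ = 0) ∧
      ¬(StrictMonoOn (fun θ => nilZ R θ) (Set.Ioo 0 (π / 2)) ∨
        StrictAntiOn (fun θ => nilZ R θ) (Set.Ioo 0 (π / 2))) := by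
  obtain ⟨h1, h2⟩ := hR
  have hp := pi_pos
  have hR0 : 0 < R := hp.trans h1
  have ha0 : 0 < arcsin (1 / 8) := arcsin_pos.2 (by norm_num)
  have hle : (1 / 8 : ℝ) ≤ π / R := by
    rw [le_div_iff₀ hR0]
    linarith
  have hab : arcsin (1 / 8) ≤ arcsin (π / R) := monotone_arcsin hle
  have hbc : arcsin (π / R) ≤ π / 2 := arcsin_le_pi_div_two _
  have hfb := lt_nilZ_arcsin_pi_div h1
  have hfa := nilZ_arcsin_lt hR0 (by linarith [pi_lt_d2])
  have hfc := nilZ_pi_div_two R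
  obtain ⟨θ, hθ, hmax⟩ := isCompact_Icc.exists_isMaxOn (Set.nonempty_Icc.2 (hab.trans hbc))
    ((continuousOn_nilZ R).mono fun x (hx : x ∈ Set.Icc (arcsin (1 / 8)) (π / 2)) =>
      ⟨ha0.trans_le hx.1, by linarith [hx.2]⟩)
  have hθR : R < nilZ R θ := hfb.trans_le (hmax ⟨hab, hbc⟩)
  have haθ : arcsin (1 / 8) < θ := by
    refine lt_of_le_of_ne hθ.1 fun h => ?_
    rw [← h] at hθR
    linarith
  have hθc : θ < π / 2 := by
    refine lt_of_le_of_ne hθ.2 fun h => ?_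
    rw [h] at hθR
    linarith
  have hθI : θ ∈ Set.Ioo 0 (π / 2) := ⟨ha0.trans haθ, hθc⟩
  refine ⟨⟨θ, hθI, (hmax.isLocalMax (Icc_mem_nhds haθ hθc)).deriv_eq_zero⟩, ?_⟩
  rintro (hm | hm)
  · have hlt := hm hθI (b := (θ + π / 2) / 2) ⟨by linarith [hθI.1], by linarith⟩ (by linarith)
    exact hlt.not_ge (hmax ⟨by linarith, by linarith⟩)
  · have hlt := hm (a := (arcsin (1 / 8) + θ) / 2) ⟨by linarith, by linarith⟩ hθI (by linarith)
    exact hlt.not_ge (hmax ⟨by linarith, by linarith⟩)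
end

section
/- One has Z(2π, π/6) = 5π/2, and Z(R, θ) ≤ 5π/2 for every R ∈ (0, 2π] and every θ ∈ (0, π/2]. (Consequently, the greatest vertical chord of any geodesic sphere of radius at most 2π has length at most 5π, attained at radius 2π.) -/
/-!
Differentiating in the radius (here: comparing two radii by means of `|sin a - sin b| ≤ |a - b|`)
shows that `Z(r, θ)` is nondecreasing in `r`, so only `r = 2π` matters. With `s = sin θ` and
`w = 2πs ∈ (0, 2π]`, clearing denominators turns `Z(2π, θ) ≤ 5π/2` into the one-variable inequality
`w (w - π) (w - 4π) ≤ (4π² - w²) sin w`, with equality at `w = π`, that is at `θ = π/6`. It is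
`cubic_le_mul_sin`. Near `0` and to the left of `π` it follows from `x - x³/6 ≤ sin x`,
with `x = w` and `x = π - w` respectively, and to the right of `π` from `sin x ≤ x` with
`x = w - π`.
-/

open Real

/-- The inequality `Z(2π, θ) ≤ 5π/2` with denominators cleared, in the variable `w = 2π sin θ`. -/
lemma cubic_le_mul_sin {w : ℝ} (h0 : 0 < w) (h1 : w ≤ 2 * π) :
    w * (w - π) * (w - 4 * π) ≤ (4 * π ^ 2 - w ^ 2) * sin w := by
  have hp : 3 < π := pi_gt_three
  have hp2 : π < 3.15 := pi_lt_d2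
  have hpp : π ^ 2 < 10 := by nlinarith
  have hc : 0 ≤ 4 * π ^ 2 - w ^ 2 := by nlinarith
  rcases le_total w (π / 2) with h | h
  · have hs := mul_le_mul_of_nonneg_left (sin_ge_sub_cube h0.le) hc
    have hw : (2 + 2 * π ^ 2 / 3) * w ≤ 10 * (π / 2) :=
      mul_le_mul (by linarith) h h0.le (by norm_num)
    -- the difference of the two sides is at least `w²` times this factor
    have key : 0 ≤ w ^ 2 * (5 * π - (2 + 2 * π ^ 2 / 3) * w + w ^ 3 / 6) := by
      have : 0 ≤ w ^ 3 := by positivity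
      exact mul_nonneg (sq_nonneg w) (by linarith)
    nlinarith
  rcases le_total w π with h' | h'
  · obtain ⟨v, rfl⟩ : ∃ v, w = π - v := ⟨π - w, by ring⟩
    have hv : 0 ≤ v := by linarith
    rw [sin_pi_sub]
    have hs := mul_le_mul_of_nonneg_left (sin_ge_sub_cube hv) hc
    have hv2 : v ≤ π / 2 := by linarith
    have hq : v * (3 * π ^ 2 + 2 * π * v - v ^ 2) ≤ 24 * π := by
      have e : 3 * π ^ 2 + 2 * π * v - v ^ 2 ≤ 4 * π ^ 2 := by nlinarith [sq_nonneg v]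
      have := mul_le_mul_of_nonneg_left e hv
      nlinarith
    -- the difference of the two sides is at least `v²` times this factor
    have key : 0 ≤ v ^ 2 * (4 * π - v * (3 * π ^ 2 + 2 * π * v - v ^ 2) / 6) :=
      mul_nonneg (sq_nonneg v) (by linarith)
    nlinarith
  · obtain ⟨u, rfl⟩ : ∃ u, w = u + π := ⟨w - π, by ring⟩
    have hu : 0 ≤ u := by linarith
    rw [sin_add_pi]
    have hs := mul_le_mul_of_nonneg_left (sin_le hu) hc
    have : 0 ≤ π * u ^ 2 := by positivity
    nlinarith

/-- The height is nondecreasing in the radius. -/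
lemma nilZ_mono {R r θ : ℝ} (h : R ≤ r) (hs : 0 < sin θ) : nilZ R θ ≤ nilZ r θ := by
  have hθ : θ ≠ 0 := by rintro rfl; simp at hs
  simp only [nilZ, if_neg hθ]
  have hsin : sin (r * sin θ) - sin (R * sin θ) ≤ (r - R) * sin θ := by
    have := (le_abs_self _).trans (abs_sin_sub_sin_le (r * sin θ) (R * sin θ))
    rwa [← sub_mul, abs_of_nonneg (mul_nonneg (sub_nonneg.2 h) hs.le)] at this
  have hk : 0 ≤ cos θ ^ 2 / (2 * sin θ ^ 2) := by positivity
  have h1 := mul_le_mul_of_nonneg_left hsin hk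
  have e : cos θ ^ 2 / (2 * sin θ ^ 2) * ((r - R) * sin θ) =
      r * cos θ ^ 2 / (2 * sin θ) - R * cos θ ^ 2 / (2 * sin θ) := by
    field_simp
  have h2 : 0 ≤ (r - R) * sin θ := mul_nonneg (sub_nonneg.2 h) hs.le
  linarith

/-- `Z(2π, π/6) = 5π/2`, and `Z(R, θ) ≤ 5π/2` for all `R ∈ (0, 2π]`, `θ ∈ (0, π/2]`:
the greatest vertical half-chord of a geodesic sphere of radius at most `2π` is `5π/2`. -/
theorem nilZ_max_two_pi :
    nilZ (2 * π) (π / 6) = 5 * π / 2 ∧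
      ∀ R ∈ Set.Ioc 0 (2 * π), ∀ θ ∈ Set.Ioc 0 (π / 2), nilZ R θ ≤ 5 * π / 2 := by
  refine ⟨?_, ?_⟩
  · have h : π / 6 ≠ 0 := by positivity
    have hw : 2 * π * (1 / 2) = π := by ring
    have h3 : √3 ^ 2 = (3 : ℝ) := sq_sqrt (by norm_num)
    simp only [nilZ, if_neg h, sin_pi_div_six, cos_pi_div_six, hw, sin_pi, div_pow, h3]
    ring
  · rintro R ⟨-, hR⟩ θ ⟨h0, h1⟩
    have hs : 0 < sin θ := sin_pos_of_pos_of_lt_pi h0 (by linarith)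
    refine (nilZ_mono hR hs).trans ?_
    simp only [nilZ, if_neg h0.ne', cos_sq']
    have hpi := pi_pos
    have key := cubic_le_mul_sin (w := 2 * π * sin θ) (by positivity)
      (by nlinarith [sin_le_one θ])
    generalize sin (2 * π * sin θ) = y at key ⊢
    generalize sin θ = s at *
    have key' : π * s * (2 * s - 1) * (s - 2) ≤ (1 - s ^ 2) * y := by
      refine le_of_mul_le_mul_left ?_ (show 0 < 4 * π ^ 2 by positivity)
      linarith
    have e : 5 * π / 2 - (2 * π * s + 2 * π * (1 - s ^ 2) / (2 * s) -
        (1 - s ^ 2) / (2 * s ^ 2) * y) =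
        ((1 - s ^ 2) * y - π * s * (2 * s - 1) * (s - 2)) / (2 * s ^ 2) := by
      field_simp
      ring
    have : 0 ≤ ((1 - s ^ 2) * y - π * s * (2 * s - 1) * (s - 2)) / (2 * s ^ 2) :=
      div_nonneg (by linarith) (by positivity)
    linarith
end

section
/- One has Z(3π/2, arcsin(2/3)) = 13π/8, and Z(R, θ) ≤ 13π/8 for every R ∈ (0, 3π/2] and every θ ∈ (0, π/2]. (Consequently, the greatest vertical chord of any geodesic sphere of radius at most 3π/2 has length at most 13π/4, attained at radius 3π/2.) -/
/-!
Put `s = sin θ`, `ρ = 3π/2`. Since `x ↦ x - sin x` is monotone, `Z(R, θ)` is nondecreasing in `R`,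
so only `R = ρ` matters. With `u = ρ s ∈ (0, ρ]`, clearing denominators and using
`ρ² + u² - (13π/4) u = (π - u)(9π/4 - u)`, the inequality `Z(ρ, θ) ≤ 13π/8` becomes
`u (π - u) (9π/4 - u) ≤ (ρ² - u²) sin u` (`profile_ineq`). Both sides vanish, with equal
first derivatives, at `u = 0` and at the equality case `u = π`, which corresponds to `s = 2/3`. The
cubic Taylor bound `x - x³/6 ≤ sin x` at `x = u` on `[0, π/2]` and at `x = π - u` on `[π/2, π]`
suffices, and on `[π, ρ]` the bound `sin v ≤ v` with `v = u - π` does.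
-/

open Real

/-- The inequality `Z(3π/2, θ) ≤ 13π/8` in the variable `u = (3π/2) sin θ`, with denominators
cleared. -/
theorem profile_ineq {u : ℝ} (h0 : 0 ≤ u) (h1 : u ≤ 3 * π / 2) :
    u * (π - u) * (9 * π / 4 - u) ≤ ((3 * π / 2) ^ 2 - u ^ 2) * sin u := by
  have hp := pi_pos
  have hp2 : π ^ 2 ≤ 10 := by nlinarith [pi_lt_d2, pi_gt_three]
  have hc : 0 ≤ (3 * π / 2) ^ 2 - u ^ 2 := by nlinarith
  rcases le_total u (π / 2) with h | h
  · have hs := mul_le_mul_of_nonneg_left (sin_ge_sub_cube h0) hc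
    have h2 : u * (9 * π ^ 2 / 4 - u ^ 2) ≤ π / 2 * (9 * 10 / 4) :=
      mul_le_mul h (by nlinarith) (by nlinarith) (by positivity)
    have h3 : 0 ≤ 13 * π / 4 - 2 * u - u * (9 * π ^ 2 / 4 - u ^ 2) / 6 := by linarith
    nlinarith [mul_nonneg (sq_nonneg u) h3]
  rcases le_total u π with h' | h'
  · obtain ⟨t, rfl⟩ : ∃ t, u = π - t := ⟨π - u, by ring⟩
    have ht : 0 ≤ t := by linarith
    have ht2 : t ≤ π / 2 := by linarith
    rw [sin_pi_sub]
    have hs := mul_le_mul_of_nonneg_left (sin_ge_sub_cube ht) hc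
    have h2 : t * (5 * π ^ 2 / 4 + 2 * π * t - t ^ 2) ≤ π / 2 * (9 * 10 / 4) :=
      mul_le_mul ht2 (by nlinarith) (by nlinarith) (by positivity)
    have h3 : 0 ≤ 9 * π / 4 - t * (5 * π ^ 2 / 4 + 2 * π * t - t ^ 2) / 6 := by linarith
    nlinarith [mul_nonneg (sq_nonneg t) h3]
  · obtain ⟨v, rfl⟩ : ∃ v, u = v + π := ⟨u - π, by ring⟩
    have hv : 0 ≤ v := by linarith
    rw [sin_add_pi]
    have hs := mul_le_mul_of_nonneg_left (sin_le hv) hc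
    nlinarith [mul_nonneg (mul_nonneg hv hv) hp.le]

theorem sub_sin_mono {x y : ℝ} (h : x ≤ y) : x - sin x ≤ y - sin y := by
  have h1 := le_trans (le_abs_self _) (abs_sin_sub_sin_le y x)
  rw [abs_of_nonneg (by linarith)] at h1
  linarith

/-- `Z(3π/2, arcsin(2/3)) = 13π/8`, and `Z(R, θ) ≤ 13π/8` for all `R ∈ (0, 3π/2]`,
`θ ∈ (0, π/2]`: the greatest vertical half-chord of a geodesic sphere of radius at
most `3π/2` is `13π/8`. -/
theorem nilZ_max_three_pi_half :
    nilZ (3 * π / 2) (arcsin (2 / 3)) = 13 * π / 8 ∧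
      ∀ R ∈ Set.Ioc 0 (3 * π / 2), ∀ θ ∈ Set.Ioc 0 (π / 2), nilZ R θ ≤ 13 * π / 8 := by
  have hp := pi_pos
  constructor
  · have hs : sin (arcsin (2 / 3)) = 2 / 3 := sin_arcsin (by norm_num) (by norm_num)
    have hne : arcsin (2 / 3) ≠ 0 := fun h => by
      rw [h, sin_zero] at hs
      norm_num at hs
    rw [nilZ, if_neg hne, cos_sq', hs, show 3 * π / 2 * (2 / 3) = π by ring, sin_pi]
    ring
  · rintro R ⟨hR0, hR⟩ θ ⟨hθ0, hθ⟩
    have hs : 0 < sin θ := sin_pos_of_pos_of_lt_pi hθ0 (by linarith)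
    have hs1 := sin_le_one θ
    rw [nilZ, if_neg hθ0.ne', cos_sq']
    set s := sin θ
    have hk : 0 ≤ (1 - s ^ 2) / (2 * s ^ 2) := div_nonneg (by nlinarith) (by positivity)
    have hu : R * s ≤ 3 * π / 2 * s := mul_le_mul_of_nonneg_right hR hs.le
    have hm := mul_le_mul_of_nonneg_left (sub_sin_mono hu) hk
    have hi := profile_ineq (u := 3 * π / 2 * s) (by positivity) (by nlinarith)
    set S := sin (3 * π / 2 * s)
    have hfin : 3 * π / 2 * s + (1 - s ^ 2) / (2 * s ^ 2) * (3 * π / 2 * s - S) ≤ 13 * π / 8 := by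
      rw [← sub_nonneg]
      have e : 13 * π / 8 - (3 * π / 2 * s + (1 - s ^ 2) / (2 * s ^ 2) * (3 * π / 2 * s - S)) =
          (((3 * π / 2) ^ 2 - (3 * π / 2 * s) ^ 2) * S -
            3 * π / 2 * s * (π - 3 * π / 2 * s) * (9 * π / 4 - 3 * π / 2 * s)) /
            (2 * (3 * π / 2 * s) ^ 2) := by
        field_simp
        ring
      rw [e]
      exact div_nonneg (by linarith) (by positivity)
    have e2 : R * s + R * (1 - s ^ 2) / (2 * s) - (1 - s ^ 2) / (2 * s ^ 2) * sin (R * s) =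
        R * s + (1 - s ^ 2) / (2 * s ^ 2) * (R * s - sin (R * s)) := by
      field_simp
      ring
    rw [e2]
    linarith
end

section
/- For every R ∈ [3π/2, 2π], one has V(R)/(5π)² > 1.43093459, where V(R) = 2π ∫₀^{π/2} X(R, θ)² · (∂Z/∂θ)(R, θ) dθ. -/
/-!
The substitution `x = R sin θ` turns the volume into

  `V(R) = 4π ∫₀ᴿ (R² - x²) (sin² x / (2 x²) + R² g(x)) dx`,
  `g(x) = sin x (2 - 2 cos x - x sin x) / (2 x⁵)`

(`nilBallVol_eq`), where `g` has a removable singularity at `0`, is positive on `(0, π)` and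
negative on `(π, 2π)`. Dropping the nonnegative first summand leaves
`V(R) ≥ 4π R² ∫₀ᴿ (R² - x²) g(x) dx`, and the remaining integral is at least `0.058 R²`
(`integral_nilG_ge`): on `[0, 3.14]` by a Taylor polynomial below `g` (`nilG_ge_poly`), and on
`[3.14, R]` by `g(x) ≥ -(4 + x) / (2 x⁵)` (`nilG_ge_tail`). Since `R ≥ 3π/2`, this gives
`V(R) ≥ 4π · 0.058 R⁴`, which exceeds `1.43093459 (5π)²`; the inequality is not sharp, the density
at `R = 3π/2` being about `2.37`.
-/

open Real

/-- The volume of the Nil geodesic ball of radius `R`. -/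
noncomputable def nilBallVol (R : ℝ) : ℝ :=
  2 * π * ∫ θ in (0 : ℝ)..(π / 2), nilX R θ ^ 2 * deriv (fun t => nilZ R t) θ

/-- The function `g(x) = sin x (2 - 2 cos x - x sin x) / (2 x⁵)`, which carries the main part of
the volume density. It extends analytically to `x = 0` with value `1 / 24`; here it takes the
junk value `0` at that point, which no integral sees. -/
noncomputable def nilG (x : ℝ) : ℝ := sin x * (2 - 2 * cos x - x * sin x) / (2 * x ^ 5)

/-- The volume density of the Nil ball of radius `R` in the variable `x = R sin θ`, up to the
factor `4π`: `h(x) = (R² - x²) (sin² x / (2 x²) + R² g(x))`. At `x = 0` it has the junk value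
`0`. -/
noncomputable def nilH (R x : ℝ) : ℝ :=
  (R ^ 2 - x ^ 2) * (sin x ^ 2 / (2 * x ^ 2) + R ^ 2 * nilG x)

/-! ### Taylor bounds for sine and cosine -/

lemma nonneg_of_hasDerivAt {f f' : ℝ → ℝ} (h0 : f 0 = 0) (hf : ∀ x, HasDerivAt f (f' x) x)
    (hf' : ∀ x, 0 ≤ x → 0 ≤ f' x) {x : ℝ} (hx : 0 ≤ x) : 0 ≤ f x := by
  have hm : MonotoneOn f (Set.Ici 0) := by
    refine monotoneOn_of_hasDerivWithinAt_nonneg (convex_Ici 0)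
      (fun y _ => (hf y).continuousAt.continuousWithinAt)
      (fun y _ => (hf y).hasDerivWithinAt) fun y hy => hf' y ?_
    rw [interior_Ici] at hy
    exact hy.le
  simpa [h0] using hm (Set.mem_Ici.2 le_rfl) (Set.mem_Ici.2 hx) hx

lemma hasDerivAt_taylor_sin (m : ℕ) (x : ℝ) :
    HasDerivAt (fun x : ℝ => ∑ j ∈ Finset.range m, (-1) ^ j * x ^ (2 * j + 1) / (2 * j + 1).factorial)
      (∑ j ∈ Finset.range m, (-1) ^ j * x ^ (2 * j) / (2 * j).factorial) x := by
  refine HasDerivAt.fun_sum fun j _ => ?_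
  refine (((hasDerivAt_pow (2 * j + 1) x).const_mul ((-1 : ℝ) ^ j)).div_const
    ((2 * j + 1).factorial : ℝ)).congr_deriv ?_
  have h1 : ((2 * j).factorial : ℝ) ≠ 0 := by positivity
  rw [Nat.factorial_succ]
  push_cast
  field_simp

lemma hasDerivAt_taylor_cos (m : ℕ) (x : ℝ) :
    HasDerivAt (fun x : ℝ => ∑ j ∈ Finset.range (m + 1), (-1) ^ j * x ^ (2 * j) / (2 * j).factorial)
      (-∑ j ∈ Finset.range m, (-1) ^ j * x ^ (2 * j + 1) / (2 * j + 1).factorial) x := by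
  simp only [Finset.sum_range_succ', ← Finset.sum_neg_distrib]
  simp only [mul_zero, pow_zero, Nat.factorial_zero]
  refine HasDerivAt.add_const _ (HasDerivAt.fun_sum fun j _ => ?_)
  refine (((hasDerivAt_pow (2 * (j + 1)) x).const_mul ((-1 : ℝ) ^ (j + 1))).div_const
    ((2 * (j + 1)).factorial : ℝ)).congr_deriv ?_
  have h1 : ((2 * j + 1).factorial : ℝ) ≠ 0 := by positivity
  rw [show 2 * (j + 1) = 2 * j + 1 + 1 by ring, Nat.factorial_succ (2 * j + 1)]
  push_cast
  field_simp
  ring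

/-- The Taylor partial sums of `cos` and `sin` at `0` lie alternately above and below the function
on `[0, ∞)`. Each sign condition is the previous one integrated from `0`, starting from
`cos x ≤ 1`. -/
lemma taylor_alternating (m : ℕ) :
    (∀ x : ℝ, 0 ≤ x → 0 ≤ (-1) ^ (m + 1) *
      (cos x - ∑ j ∈ Finset.range (m + 1), (-1) ^ j * x ^ (2 * j) / (2 * j).factorial)) ∧
    (∀ x : ℝ, 0 ≤ x → 0 ≤ (-1) ^ (m + 1) *
      (sin x - ∑ j ∈ Finset.range (m + 1), (-1) ^ j * x ^ (2 * j + 1) / (2 * j + 1).factorial)) := by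
  have key : ∀ m : ℕ, (∀ x : ℝ, 0 ≤ x → 0 ≤ (-1) ^ (m + 1) *
      (cos x - ∑ j ∈ Finset.range (m + 1), (-1) ^ j * x ^ (2 * j) / (2 * j).factorial)) →
    (∀ x : ℝ, 0 ≤ x → 0 ≤ (-1) ^ (m + 1) *
      (sin x - ∑ j ∈ Finset.range (m + 1), (-1) ^ j * x ^ (2 * j + 1) / (2 * j + 1).factorial)) := by
    intro m hc x hx
    exact nonneg_of_hasDerivAt (by simp)
      (fun y => ((hasDerivAt_sin y).sub (hasDerivAt_taylor_sin (m + 1) y)).const_mul _) hc hx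
  have hcos : ∀ x : ℝ, 0 ≤ x → 0 ≤ (-1) ^ (m + 1) *
      (cos x - ∑ j ∈ Finset.range (m + 1), (-1) ^ j * x ^ (2 * j) / (2 * j).factorial) := by
    induction m with
    | zero =>
      intro x _
      simpa using cos_le_one x
    | succ m ih =>
      intro x hx
      refine nonneg_of_hasDerivAt ?_
        (fun y => ((hasDerivAt_cos y).sub (hasDerivAt_taylor_cos (m + 1) y)).const_mul _) ?_ hx
      · simp [Finset.sum_range_succ']
      · intro y hy
        have := key m ih y hy
        rw [pow_succ]
        linarith
  exact ⟨hcos, key m hcos⟩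

/-! ### Boundedness and integrability of the density -/

/-- `g` is bounded near its removable singularity; only integrability depends on this. -/
lemma abs_nilG_le {x : ℝ} (hx : 0 < x) : |nilG x| ≤ 1 / 12 := by
  have h1 : |sin x| ≤ x := by simpa [abs_of_pos hx] using abs_sin_le_abs (x := x)
  have h2 : |2 - 2 * cos x - x * sin x| ≤ x ^ 4 / 6 := by
    have h3 := (taylor_alternating 2).1 x hx.le
    norm_num [Finset.sum_range_succ, Nat.factorial] at h3
    have h4 := mul_le_mul_of_nonneg_left (sin_ge_sub_cube hx.le) hx.le
    have h5 := mul_le_mul_of_nonneg_left (sin_le hx.le) hx.le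
    have h6 := one_sub_sq_div_two_le_cos (x := x)
    have h7 : 0 < x ^ 4 := by positivity
    rw [abs_le]
    constructor <;> nlinarith
  rw [nilG, abs_div, abs_mul, abs_of_pos (by positivity : 0 < 2 * x ^ 5), div_le_iff₀ (by positivity)]
  calc |sin x| * |2 - 2 * cos x - x * sin x| ≤ x * (x ^ 4 / 6) := by gcongr
    _ = _ := by ring

lemma abs_nilH_le {R x : ℝ} (hx : 0 < x) (hxR : x ≤ R) :
    |nilH R x| ≤ R ^ 2 * (1 / 2 + R ^ 2 / 12) := by
  have h1 : |sin x| ≤ x := by simpa [abs_of_pos hx] using abs_sin_le_abs (x := x)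
  have h2 : sin x ^ 2 / (2 * x ^ 2) ≤ 1 / 2 := by
    rw [div_le_iff₀ (by positivity)]
    nlinarith [sq_le_sq' (abs_le.1 h1).1 (abs_le.1 h1).2]
  have h3 : |sin x ^ 2 / (2 * x ^ 2)| ≤ 1 / 2 := by rwa [abs_of_nonneg (by positivity)]
  have h4 : |R ^ 2 - x ^ 2| ≤ R ^ 2 := by
    rw [abs_of_nonneg (by nlinarith)]
    nlinarith
  have h5 : |R ^ 2 * nilG x| ≤ R ^ 2 / 12 := by
    rw [abs_mul, abs_of_nonneg (by positivity : 0 ≤ R ^ 2)]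
    nlinarith [abs_nilG_le hx, sq_nonneg R]
  rw [nilH, abs_mul]
  gcongr
  exact (abs_add_le _ _).trans (add_le_add h3 h5)

lemma continuousOn_nilG : ContinuousOn nilG (Set.Ioi 0) := by
  unfold nilG
  refine ContinuousOn.div (by fun_prop) (by fun_prop) fun x hx => ?_
  have : (0 : ℝ) < x := hx
  positivity

lemma continuousOn_nilH (R : ℝ) : ContinuousOn (nilH R) (Set.Ioi 0) := by
  have h : ContinuousOn (fun x : ℝ => sin x ^ 2 / (2 * x ^ 2)) (Set.Ioi 0) := by
    refine ContinuousOn.div (by fun_prop) (by fun_prop) fun x hx => ?_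
    have : (0 : ℝ) < x := hx
    positivity
  unfold nilH
  have := continuousOn_nilG
  fun_prop

lemma intervalIntegrable_of_bound {f : ℝ → ℝ} {b C : ℝ} (hb : 0 ≤ b)
    (hf : ContinuousOn f (Set.Ioc 0 b)) (hC : ∀ x ∈ Set.Ioc 0 b, |f x| ≤ C) :
    IntervalIntegrable f MeasureTheory.volume 0 b := by
  rw [intervalIntegrable_iff_integrableOn_Ioc_of_le hb]
  exact MeasureTheory.IntegrableOn.of_bound (by simp) (hf.aestronglyMeasurable measurableSet_Ioc) C
    ((MeasureTheory.ae_restrict_iff' measurableSet_Ioc).2 (Filter.Eventually.of_forall hC))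

/-! ### The change of variables -/

/-- The integrand of the volume is the pullback of `2 h(x) dx` under `x = R sin θ`. -/
lemma integrand_eq {R θ : ℝ} (hR : 0 < R) (h0 : 0 < θ) (h1 : θ < π / 2) :
    nilX R θ ^ 2 * deriv (fun t => nilZ R t) θ = 2 * (nilH R (R * sin θ) * (R * cos θ)) := by
  have hs : 0 < sin θ := sin_pos_of_pos_of_lt_pi h0 (by linarith)
  have hd : HasDerivAt (fun t => nilZ R t)
      (cos θ * (R / 2 * (1 + cos (R * sin θ)) - R / (2 * sin θ ^ 2) * (1 + cos (R * sin θ))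
        + sin (R * sin θ) / sin θ ^ 3)) θ := by
    have he : (fun t => nilZ R t) =ᶠ[nhds θ] fun t => R * sin t + R * cos t ^ 2 / (2 * sin t) -
      (cos t ^ 2 / (2 * sin t ^ 2)) * sin (R * sin t) := by
      filter_upwards [isOpen_ne.mem_nhds h0.ne'] with t ht
      have ht : t ≠ 0 := ht
      simp [nilZ, ht]
    refine HasDerivAt.congr_of_eventuallyEq ?_ he
    have hS := hasDerivAt_sin θ
    have hC := (hasDerivAt_cos θ).pow 2
    refine (((hS.const_mul R).add ((hC.const_mul R).div (hS.const_mul 2)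
      (mul_pos two_pos hs).ne')).sub ((hC.div ((hS.pow 2).const_mul 2)
      (mul_pos two_pos (pow_pos hs 2)).ne').mul (hS.const_mul R).sin)).congr_deriv ?_
    -- the two sides agree once `cos³ θ` is reduced modulo `cos² θ + sin² θ = 1`
    have hc : cos θ ^ 2 = 1 - sin θ ^ 2 := cos_sq' θ
    simp
    field_simp
    ring_nf
    simp only [show cos θ ^ 3 = cos θ * (1 - sin θ ^ 2) by rw [← hc]; ring]
    ring
  have hX : nilX R θ ^ 2 = 2 * cos θ ^ 2 / sin θ ^ 2 * (1 - cos (R * sin θ)) := by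
    have : sin (R * sin θ / 2) ^ 2 = (1 - cos (R * sin θ)) / 2 := by
      rw [sin_sq_eq_half_sub, show 2 * (R * sin θ / 2) = R * sin θ by ring]; ring
    rw [nilX, if_neg h0.ne', mul_pow, this]
    field_simp
  rw [hd.deriv, hX, nilH, nilG]
  have e1 : sin (R * sin θ) ^ 2 = 1 - cos (R * sin θ) ^ 2 := sin_sq _
  have e2 : R ^ 2 - (R * sin θ) ^ 2 = R ^ 2 * cos θ ^ 2 := by rw [cos_sq']; ring
  have e3 : sin (R * sin θ) * (2 - 2 * cos (R * sin θ) - R * sin θ * sin (R * sin θ)) =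
      2 * sin (R * sin θ) * (1 - cos (R * sin θ)) - R * sin θ * (1 - cos (R * sin θ) ^ 2) := by
    rw [← e1]; ring
  rw [e3, e1, e2]
  field_simp
  ring

/-- The volume after the substitution `x = R sin θ`. -/
lemma nilBallVol_eq {R : ℝ} (hR : 0 < R) :
    nilBallVol R = 4 * π * ∫ x in (0 : ℝ)..R, nilH R x := by
  have hpi := pi_pos
  have h1 : ∫ θ in (0 : ℝ)..(π / 2), nilX R θ ^ 2 * deriv (fun t => nilZ R t) θ =
      ∫ θ in (0 : ℝ)..(π / 2), 2 * (nilH R (R * sin θ) * (R * cos θ)) := by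
    refine intervalIntegral.integral_congr_Ioo_of_le (by positivity) ?_
    intro θ hθ
    exact integrand_eq hR hθ.1 hθ.2
  have hmap : ∀ θ ∈ Set.Ioc 0 (π / 2), 0 < R * sin θ ∧ R * sin θ ≤ R := fun θ hθ =>
    ⟨mul_pos hR (sin_pos_of_pos_of_lt_pi hθ.1 (by linarith [hθ.2])),
      by nlinarith [sin_le_one θ]⟩
  have h2 : ∫ θ in (0 : ℝ)..(π / 2), nilH R (R * sin θ) * (R * cos θ) =
      ∫ x in (0 : ℝ)..R, nilH R x := by
    have hI : Set.uIcc 0 (π / 2) = Set.Icc 0 (π / 2) := Set.uIcc_of_le (by positivity)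
    have := intervalIntegral.integral_comp_mul_deriv''' (a := 0) (b := π / 2)
      (f := fun θ => R * sin θ) (f' := fun θ => R * cos θ) (g := nilH R) (by fun_prop)
      (fun θ _ => ((hasDerivAt_sin θ).const_mul R).hasDerivWithinAt) ?_ ?_ ?_
    · simpa using this
    · refine (continuousOn_nilH R).mono ?_
      rintro _ ⟨θ, hθ, rfl⟩
      rw [min_eq_left (by positivity), max_eq_right (by positivity)] at hθ
      exact (hmap θ ⟨hθ.1, hθ.2.le⟩).1
    · have hInt : IntervalIntegrable (nilH R) MeasureTheory.volume 0 R :=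
        intervalIntegrable_of_bound hR.le ((continuousOn_nilH R).mono fun x hx => hx.1)
          fun x hx => abs_nilH_le hx.1 hx.2
      rw [intervalIntegrable_iff_integrableOn_Icc_of_le hR.le] at hInt
      refine hInt.mono_set ?_
      rintro _ ⟨θ, hθ, rfl⟩
      rw [hI] at hθ
      exact ⟨mul_nonneg hR.le (sin_nonneg_of_nonneg_of_le_pi hθ.1 (by linarith [hθ.2])),
        by nlinarith [sin_le_one θ]⟩
    · rw [hI, ← intervalIntegrable_iff_integrableOn_Icc_of_le (by positivity)]
      refine intervalIntegrable_of_bound (C := R ^ 2 * (1 / 2 + R ^ 2 / 12) * R)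
        (by positivity) ?_ ?_
      · refine ContinuousOn.mul ?_ (by fun_prop)
        exact (continuousOn_nilH R).comp (by fun_prop) fun θ hθ => (hmap θ hθ).1
      · intro θ hθ
        rw [abs_mul, abs_mul R, abs_of_pos hR]
        refine mul_le_mul (abs_nilH_le (hmap θ hθ).1 (hmap θ hθ).2) ?_ (by positivity)
          (by positivity)
        nlinarith [abs_cos_le_one θ]
  rw [nilBallVol, h1, intervalIntegral.integral_const_mul, h2]
  ring

/-! ### Lower bounds for the integral of `g` -/

/-- The numerator of `2 g` equals `2 sin x - sin 2x - x / 2 + (x / 2) cos 2x`; replacing the three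
trigonometric terms by Taylor sums of suitable parity and dividing by `2 x⁵` gives this bound. -/
lemma nilG_ge_poly {x : ℝ} (hx : 0 < x) :
    1 / 24 - 7 / 720 * x ^ 2 + 107 / 120960 * x ^ 4 - 163 / 3628800 * x ^ 6
      + 1 / 675675 * x ^ 8 - 2 / 42567525 * x ^ 10 ≤ nilG x := by
  have h1 := (taylor_alternating 5).2 x hx.le
  have h2 := (taylor_alternating 6).2 (2 * x) (by positivity)
  have h3 := mul_nonneg hx.le ((taylor_alternating 7).1 (2 * x) (by positivity))
  norm_num [Finset.sum_range_succ, Nat.factorial] at h1 h2 h3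
  have e : sin x * (2 - 2 * cos x - x * sin x) =
      2 * sin x - sin (2 * x) - x / 2 + x * cos (2 * x) / 2 := by
    rw [sin_two_mul, cos_two_mul, cos_sq']; ring
  rw [nilG, e, le_div_iff₀ (by positivity)]
  ring_nf at h1 h2 h3 ⊢
  linarith

/-- A bound that is weak near `0`, where `g` is positive, but serves beyond `π`, where `g` turns
negative. -/
lemma nilG_ge_tail {x : ℝ} (hx : 0 < x) : -((4 + x) / (2 * x ^ 5)) ≤ nilG x := by
  rw [nilG, ← neg_div]
  gcongr
  have e : sin x * (2 - 2 * cos x - x * sin x) =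
      2 * sin x - sin (2 * x) - x * sin x ^ 2 := by
    rw [sin_two_mul]; ring
  rw [e]
  nlinarith [neg_one_le_sin x, sin_le_one (2 * x), sin_sq_le_one x]

lemma intervalIntegrable_nilG (R : ℝ) {a b : ℝ} (ha : 0 ≤ a) (hab : a ≤ b) :
    IntervalIntegrable (fun x => (R ^ 2 - x ^ 2) * nilG x) MeasureTheory.volume a b := by
  have h : IntervalIntegrable nilG MeasureTheory.volume 0 b :=
    intervalIntegrable_of_bound (ha.trans hab) (continuousOn_nilG.mono fun x hx => hx.1)
      fun x hx => abs_nilG_le hx.1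
  have h' : IntervalIntegrable nilG MeasureTheory.volume a b :=
    h.mono_set (by
      rw [Set.uIcc_of_le hab, Set.uIcc_of_le (ha.trans hab)]
      exact Set.Icc_subset_Icc_left ha)
  exact h'.continuousOn_mul (by fun_prop)

/-- The breakpoint `157 / 50 = 3.14` is a rational number just below `π`, the first sign change
of `g`. -/
lemma integral_nilG_head {R : ℝ} (hR : 157 / 50 ≤ R) :
    0.0688 * R ^ 2 - 0.0977 ≤ ∫ x in (0 : ℝ)..(157 / 50), (R ^ 2 - x ^ 2) * nilG x := by
  have hderiv : ∀ x : ℝ, HasDerivAt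
      (fun x : ℝ => R ^ 2 * (1 / 24 * x - 7 / 720 * (x ^ 3 / 3) + 107 / 120960 * (x ^ 5 / 5)
          - 163 / 3628800 * (x ^ 7 / 7) + 1 / 675675 * (x ^ 9 / 9) - 2 / 42567525 * (x ^ 11 / 11))
        - (1 / 24 * (x ^ 3 / 3) - 7 / 720 * (x ^ 5 / 5) + 107 / 120960 * (x ^ 7 / 7)
          - 163 / 3628800 * (x ^ 9 / 9) + 1 / 675675 * (x ^ 11 / 11)
          - 2 / 42567525 * (x ^ 13 / 13)))
      ((R ^ 2 - x ^ 2) * (1 / 24 - 7 / 720 * x ^ 2 + 107 / 120960 * x ^ 4 - 163 / 3628800 * x ^ 6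
        + 1 / 675675 * x ^ 8 - 2 / 42567525 * x ^ 10)) x := by
    intro x
    have h (n : ℕ) := (hasDerivAt_pow n x).div_const (n : ℝ)
    have h1 := hasDerivAt_id' x
    refine ((((((((h1.const_mul (1 / 24)).sub ((h 3).const_mul (7 / 720))).add
      ((h 5).const_mul (107 / 120960))).sub ((h 7).const_mul (163 / 3628800))).add
      ((h 9).const_mul (1 / 675675))).sub ((h 11).const_mul (2 / 42567525))).const_mul (R ^ 2)).sub
      (((((((h 3).const_mul (1 / 24)).sub ((h 5).const_mul (7 / 720))).add
      ((h 7).const_mul (107 / 120960))).sub ((h 9).const_mul (163 / 3628800))).add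
      ((h 11).const_mul (1 / 675675))).sub ((h 13).const_mul (2 / 42567525)))).congr_deriv ?_
    norm_num
    ring
  have hInt := intervalIntegral.integral_eq_sub_of_hasDerivAt (a := 0) (b := 157 / 50)
    (fun x _ => hderiv x) (Continuous.intervalIntegrable (by fun_prop) _ _)
  have hmono := intervalIntegral.integral_mono_on_of_le_Ioo (a := 0) (b := 157 / 50)
    (by norm_num) (Continuous.intervalIntegrable (by fun_prop) _ _)
    (intervalIntegrable_nilG R le_rfl (by norm_num))
    (fun x hx => mul_le_mul_of_nonneg_left (nilG_ge_poly hx.1)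
      (by nlinarith [hx.1, hx.2] : 0 ≤ R ^ 2 - x ^ 2))
  rw [hInt] at hmono
  refine le_trans ?_ hmono
  norm_num
  nlinarith [sq_nonneg R]

lemma integral_nilG_tail {R : ℝ} (hR : 157 / 50 ≤ R) :
    -((R ^ 2 - (157 / 50) ^ 2) * 0.01053) ≤
      ∫ x in (157 / 50)..R, (R ^ 2 - x ^ 2) * nilG x := by
  have hpos : ∀ x ∈ Set.uIcc (157 / 50) R, 0 < x := fun x hx => by
    rw [Set.uIcc_of_le hR] at hx
    linarith [hx.1]
  have hcont : ContinuousOn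
      (fun x : ℝ => (R ^ 2 - (157 / 50) ^ 2) * -((4 + x) / (2 * x ^ 5)))
      (Set.uIcc (157 / 50) R) := by
    refine ContinuousOn.mul (by fun_prop) (ContinuousOn.neg
      (ContinuousOn.div (by fun_prop) (by fun_prop) fun x hx => ?_))
    have := hpos x hx
    positivity
  -- `0.01053` bounds the antiderivative `1 / (2 x⁴) + 1 / (6 x³)` of the tail bound at `3.14`
  have hInt := intervalIntegral.integral_eq_sub_of_hasDerivAt (a := 157 / 50) (b := R)
    (f := fun x => (R ^ 2 - (157 / 50) ^ 2) * (1 / (2 * x ^ 4) + 1 / (6 * x ^ 3)))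
    (f' := fun x => (R ^ 2 - (157 / 50) ^ 2) * -((4 + x) / (2 * x ^ 5))) (fun x hx => by
      have hx := hpos x hx
      have h (n : ℕ) (c : ℝ) (hc : 0 < c) := (hasDerivAt_const x (1 : ℝ)).div
        ((hasDerivAt_pow n x).const_mul c) (mul_pos hc (pow_pos hx n)).ne'
      refine (((h 4 2 two_pos).add (h 3 6 (by norm_num))).const_mul _).congr_deriv ?_
      norm_num
      field_simp
      ring) hcont.intervalIntegrable
  have hmono := intervalIntegral.integral_mono_on hR hcont.intervalIntegrable
    (intervalIntegrable_nilG R (by norm_num) hR) (fun x hx => by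
      have hx0 : 0 < x := by linarith [hx.1]
      have h1 : 0 ≤ R ^ 2 - x ^ 2 := by nlinarith [hx.1, hx.2]
      have h2 : R ^ 2 - x ^ 2 ≤ R ^ 2 - (157 / 50) ^ 2 := by nlinarith [hx.1, hx.2]
      have h3 : 0 ≤ (4 + x) / (2 * x ^ 5) := by positivity
      calc (R ^ 2 - (157 / 50) ^ 2) * -((4 + x) / (2 * x ^ 5))
          ≤ (R ^ 2 - x ^ 2) * -((4 + x) / (2 * x ^ 5)) := by nlinarith
        _ ≤ _ := mul_le_mul_of_nonneg_left (nilG_ge_tail hx0) h1)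
  rw [hInt] at hmono
  refine le_trans ?_ hmono
  have h1 : 0 ≤ R ^ 2 - (157 / 50) ^ 2 := by nlinarith
  have h2 : 0 ≤ 1 / (2 * R ^ 4) + 1 / (6 * R ^ 3) := by
    have : 0 < R := by linarith
    positivity
  rw [← mul_sub, ← mul_neg]
  refine mul_le_mul_of_nonneg_left ?_ h1
  norm_num at h2 ⊢
  linarith

lemma integral_nilG_ge {R : ℝ} (hR : 157 / 50 ≤ R) :
    0.058 * R ^ 2 ≤ ∫ x in (0 : ℝ)..R, (R ^ 2 - x ^ 2) * nilG x := by
  rw [← intervalIntegral.integral_add_adjacent_intervals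
    (intervalIntegrable_nilG R le_rfl (by norm_num : (0 : ℝ) ≤ 157 / 50))
    (intervalIntegrable_nilG R (by norm_num) hR)]
  have h1 := integral_nilG_head hR
  have h2 := integral_nilG_tail hR
  nlinarith

/-- For `R ∈ [3π/2, 2π]`, the density lower bound `V(R)/(5π)²` exceeds `1.43093459`. -/
theorem nil_density_bound_high (R : ℝ) (hR : R ∈ Set.Icc (3 * π / 2) (2 * π)) :
    1.43093459 < nilBallVol R / (5 * π) ^ 2 := by
  have hp1 := pi_gt_d4
  have hp2 := pi_lt_d4
  have hR1 : 4.712 ≤ R := by linarith [hR.1]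
  have hR0 : 0 < R := by linarith
  have hJ := integral_nilG_ge (R := R) (by linarith)
  -- the nonnegative summand `sin² x / (2 x²)` of `h` is dropped
  have hle : R ^ 2 * ∫ x in (0 : ℝ)..R, (R ^ 2 - x ^ 2) * nilG x ≤ ∫ x in (0 : ℝ)..R, nilH R x := by
    rw [← intervalIntegral.integral_const_mul]
    refine intervalIntegral.integral_mono_on_of_le_Ioo hR0.le
      ((intervalIntegrable_nilG R le_rfl hR0.le).const_mul _)
      (intervalIntegrable_of_bound hR0.le ((continuousOn_nilH R).mono fun x hx => hx.1)
        fun x hx => abs_nilH_le hx.1 hx.2) fun x hx => ?_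
    have h1 : 0 ≤ R ^ 2 - x ^ 2 := by nlinarith [hx.1, hx.2]
    have h2 : 0 ≤ sin x ^ 2 / (2 * x ^ 2) := by positivity
    rw [nilH]
    nlinarith [mul_nonneg h1 h2]
  have hR2 : 22.2 ≤ R ^ 2 := by nlinarith
  -- the claim amounts to the integral exceeding `1.43093459 · 25 π / 4 ≈ 28.10`
  have hI : 28.5 ≤ ∫ x in (0 : ℝ)..R, nilH R x := by nlinarith
  rw [nilBallVol_eq hR0, lt_div_iff₀ (by positivity)]
  nlinarith [pi_pos]
end
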